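/- For each n ≥ 1 and m = n + 2 there exists a uniquely optimal graph in G_{n,m}. This graph is a balanced weak subdivision of K₄, specified up to isomorphism by the following additional conditions, where m ≡ r (mod 6) with r ∈ {−2, −1, 0, 1, 2, 3}: if r ∈ {0, 1, −1}, no further condition is needed; if r = 2 (respectively r = −2), the two chains that are one edge longer (respectively shorter) than the others correspond to two non-adjacent edges of K₄; if r = 3, the three longer chains correspond to a path with three edges in K₄. -/

import Mathlib

open Classical Finset

noncomputable section

/-- A finite multigraph: edges carry two (possibly equal) endpoints. -/
structure Multigraph where
  V : Type
  E : Type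
  [fintV : Fintype V]
  [fintE : Fintype E]
  src : E → V
  tgt : E → V

attribute [instance] Multigraph.fintV Multigraph.fintE

namespace Multigraph

variable (G : Multigraph)

/-- Number of vertices. -/
def nV : ℕ := Fintype.card G.V

/-- Number of edges (with multiplicity). -/
def nE : ℕ := Fintype.card G.E

/-- One step along an edge belonging to the edge set `S`. -/
def stepOn (S : Finset G.E) (u v : G.V) : Prop :=
  ∃ e ∈ S, (G.src e = u ∧ G.tgt e = v) ∨ (G.src e = v ∧ G.tgt e = u)

/-- The spanning subgraph with edge set `S` is connected. -/
def ConnOn (S : Finset G.E) : Prop :=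
  ∀ u v : G.V, Relation.ReflTransGen (G.stepOn S) u v

/-- `G` is connected. -/
def Connected : Prop := G.ConnOn Finset.univ

/-- The edge set `F` disconnects `G` (i.e. is a disconnection). -/
def Disconnects (F : Finset G.E) : Prop := ¬ G.ConnOn (Finset.univ \ F)

/-- `d i G`: the number of `i`-disconnections of `G`. -/
def d (i : ℕ) : ℕ :=
  ((Finset.univ : Finset (Finset G.E)).filter fun F => F.card = i ∧ G.Disconnects F).card

/-- The all-terminal reliability `R(G,p)`: each edge is independently retained with
probability `p`; this is the probability that the retained spanning subgraph is connected. -/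
def rel (p : ℝ) : ℝ :=
  ∑ S : Finset G.E, if G.ConnOn S then p ^ S.card * (1 - p) ^ (G.nE - S.card) else 0

/-- `e` is a bridge. -/
def IsBridge (e : G.E) : Prop := G.Disconnects {e}

def Bridgeless : Prop := ∀ e : G.E, ¬ G.IsBridge e

/-- The number of spanning trees of `G` (connected spanning subgraphs with `nV - 1` edges). -/
def treeCount : ℕ :=
  ((Finset.univ : Finset (Finset G.E)).filter fun S => S.card + 1 = G.nV ∧ G.ConnOn S).card

/-- The edge-connectivity: the least size of a disconnecting set of edges. -/
def edgeConnectivity : ℕ :=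
  sInf {i : ℕ | ∃ F : Finset G.E, F.card = i ∧ G.Disconnects F}

/-- Degree of a vertex (a loop counts twice). -/
def deg (v : G.V) : ℕ :=
  (Finset.univ.filter fun e => G.src e = v).card +
    (Finset.univ.filter fun e => G.tgt e = v).card

/-- The edges crossing the vertex set `A`. -/
def cutEdges (A : Finset G.V) : Finset G.E :=
  Finset.univ.filter fun e =>
    (G.src e ∈ A ∧ G.tgt e ∉ A) ∨ (G.src e ∉ A ∧ G.tgt e ∈ A)

/-- `F` is a cut: the set of edges crossing a nontrivial bipartition of the vertices. -/
def IsCut (F : Finset G.E) : Prop :=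
  ∃ A : Finset G.V, A.Nonempty ∧ A ≠ Finset.univ ∧ F = G.cutEdges A

/-- `F` is a bond: a minimal cut. -/
def IsBond (F : Finset G.E) : Prop :=
  G.IsCut F ∧ ∀ F' ⊆ F, G.IsCut F' → F' = F

/-- Number of `s`-bonds of `G`. -/
def bondCount (s : ℕ) : ℕ :=
  ((Finset.univ : Finset (Finset G.E)).filter fun F => F.card = s ∧ G.IsBond F).card

/-- Adjacency of vertices. -/
def Adj (u v : G.V) : Prop :=
  ∃ e : G.E, (G.src e = u ∧ G.tgt e = v) ∨ (G.src e = v ∧ G.tgt e = u)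

/-- `G` is simple: no loops and no parallel edges. -/
def IsSimple : Prop :=
  (∀ e : G.E, G.src e ≠ G.tgt e) ∧
    ∀ e f : G.E,
      ((G.src e = G.src f ∧ G.tgt e = G.tgt f) ∨ (G.src e = G.tgt f ∧ G.tgt e = G.src f)) →
        e = f

end Multigraph

/-- `G ∈ 𝒢_{n,m}`: connected with `n` vertices and `m` edges. -/
def memG (G : Multigraph) (n m : ℕ) : Prop :=
  G.nV = n ∧ G.nE = m ∧ G.Connected

/-- Isomorphism of multigraphs. -/
structure MGIso (G H : Multigraph) where
  vMap : G.V ≃ H.V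
  eMap : G.E ≃ H.E
  ends_eq : ∀ e : G.E,
    (H.src (eMap e) = vMap (G.src e) ∧ H.tgt (eMap e) = vMap (G.tgt e)) ∨
    (H.src (eMap e) = vMap (G.tgt e) ∧ H.tgt (eMap e) = vMap (G.src e))

def IsIso (G H : Multigraph) : Prop := Nonempty (MGIso G H)

/-- `G` is `p`-optimal in `𝒢_{n,m}`. -/
def pOptimal (G : Multigraph) (n m : ℕ) (p : ℝ) : Prop :=
  memG G n m ∧ ∀ H : Multigraph, memG H n m → H.rel p ≤ G.rel p

/-- `G` is uniquely optimal in `𝒢_{n,m}`: strictly more reliable than every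
non-isomorphic member, for every `p ∈ (0,1)`. -/
def UniquelyOptimal (G : Multigraph) (n m : ℕ) : Prop :=
  memG G n m ∧ ∀ H : Multigraph, memG H n m → ¬ IsIso G H →
    ∀ p : ℝ, 0 < p → p < 1 → H.rel p < G.rel p

noncomputable instance quotFintype {α : Type} [Fintype α] {r : α → α → Prop} :
    Fintype (Quot r) :=
  letI := Classical.decEq (Quot r)
  Fintype.ofSurjective (Quot.mk r) fun q => Quot.exists_rep q

/-- Identification of the endpoints of zero-weight edges. -/
def zeroRel (D : Multigraph) (w : D.E → ℕ) : D.V → D.V → Prop :=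
  fun u v => ∃ e : D.E, w e = 0 ∧ D.src e = u ∧ D.tgt e = v

/-- The `j`-th node along the chain replacing the edge `e` (whose chain has `w e` edges). -/
def chainNode (D : Multigraph) (w : D.E → ℕ) (e : D.E) (j : ℕ) :
    Quot (zeroRel D w) ⊕ (Σ f : D.E, Fin (w f - 1)) :=
  if h : 0 < j ∧ j < w e then Sum.inr ⟨e, ⟨j - 1, by omega⟩⟩
  else if j = 0 then Sum.inl (Quot.mk _ (D.src e))
  else Sum.inl (Quot.mk _ (D.tgt e))

/-- The weak subdivision of `D` determined by the chain lengths `w`: each edge `e` is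
replaced by a chain with `w e` edges; zero-weight edges are contracted. -/
def subdivide (D : Multigraph) (w : D.E → ℕ) : Multigraph where
  V := Quot (zeroRel D w) ⊕ (Σ f : D.E, Fin (w f - 1))
  E := Σ f : D.E, Fin (w f)
  src f := chainNode D w f.1 f.2.val
  tgt f := chainNode D w f.1 (f.2.val + 1)

/-- The zero-weight edges contain no cycle (no "zero cycle"): they form a forest. -/
def ZeroAcyclic (D : Multigraph) (w : D.E → ℕ) : Prop :=
  Fintype.card (Quot (zeroRel D w)) +
      (Finset.univ.filter fun e : D.E => w e = 0).card = Fintype.card D.V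

/-- `G` is a weak subdivision of `D` with chain lengths `w`. -/
def IsWeakSubdivision (G D : Multigraph) (w : D.E → ℕ) : Prop :=
  ZeroAcyclic D w ∧ IsIso G (subdivide D w)

/-- `D` is a weak distillation of `G`. -/
def IsWeakDistillation (D G : Multigraph) : Prop :=
  ∃ w : D.E → ℕ, IsWeakSubdivision G D w

/-- The chain lengths differ pairwise by at most one. -/
def BalancedWeights {E : Type} (w : E → ℕ) : Prop := ∀ e f : E, w e ≤ w f + 1

/-- `D ∈ 𝒟_k`: connected, cubic, 3-edge-connected, of exceedance `k`. -/
def memDk (k : ℕ) (D : Multigraph) : Prop :=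
  D.Connected ∧ (∀ v : D.V, D.deg v = 3) ∧
    (∀ F : Finset D.E, D.Disconnects F → 3 ≤ F.card) ∧ D.nE = D.nV + k

/-- Identification of the two endpoints of the edge `e`. -/
def contractRel (G : Multigraph) (e : G.E) : G.V → G.V → Prop :=
  fun u v => u = G.src e ∧ v = G.tgt e

/-- Contraction of the edge `e`. -/
def Multigraph.contract (G : Multigraph) (e : G.E) : Multigraph :=
  letI := Classical.decEq G.E
  { V := Quot (contractRel G e)
    E := {f : G.E // f ≠ e}
    src := fun f => Quot.mk _ (G.src f.1)
    tgt := fun f => Quot.mk _ (G.tgt f.1) }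

/-- `G'` is obtained from `G` by shifting an edge: in an intermediate graph `H`
(the expansion of `G` at a vertex by the new edge `e'`), the edges `e, e'` form a
2-bond; contracting `e'` gives back `G`, while contracting `e` gives `G'`. -/
def IsShiftOf (G G' : Multigraph) : Prop :=
  ∃ (H : Multigraph) (e e' : H.E), e ≠ e' ∧
    H.src e ≠ H.tgt e ∧ H.src e' ≠ H.tgt e' ∧
    H.IsBond {e, e'} ∧
    IsIso (H.contract e') G ∧ IsIso (H.contract e) G'

/-- Equivalence of graphs: repeated edge shifting. -/
def EquivalentGraphs (G G' : Multigraph) : Prop :=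
  Relation.ReflTransGen IsShiftOf G G'

/-- `G'` is obtained from `G` by moving the (non-loop) edge `e`: contracting `e` and
expanding a new edge, identified with `e` via `φ`, at an arbitrary vertex.
Equivalently, `G/e` and `G'/φ e` agree, compatibly with the edge identification `φ`. -/
def MovedEdge (G G' : Multigraph) (φ : G.E ≃ G'.E) (e : G.E) : Prop :=
  G.src e ≠ G.tgt e ∧ G'.src (φ e) ≠ G'.tgt (φ e) ∧
  ∃ ψ : Quot (contractRel G e) ≃ Quot (contractRel G' (φ e)),
    ∀ f : G.E, f ≠ e →
      ((ψ (Quot.mk _ (G.src f)) = Quot.mk _ (G'.src (φ f)) ∧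
        ψ (Quot.mk _ (G.tgt f)) = Quot.mk _ (G'.tgt (φ f))) ∨
       (ψ (Quot.mk _ (G.src f)) = Quot.mk _ (G'.tgt (φ f)) ∧
        ψ (Quot.mk _ (G.tgt f)) = Quot.mk _ (G'.src (φ f))))

/-- Move one edge from the chain `a` to the chain `b`. -/
def moveWeight {E : Type} (w : E → ℕ) (a b : E) : E → ℕ :=
  fun g => if g = b then w b + 1 else if g = a then w a - 1 else w g

/-- The chains of maximal length. -/
def maxChains (D : Multigraph) (w : D.E → ℕ) : Finset D.E :=
  Finset.univ.filter fun e => ∀ f : D.E, w f ≤ w e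

/-- The chains of minimal length. -/
def minChains (D : Multigraph) (w : D.E → ℕ) : Finset D.E :=
  Finset.univ.filter fun e => ∀ f : D.E, w e ≤ w f

/-- Degree of `v` within the edge set `S`. -/
def degIn (D : Multigraph) (S : Finset D.E) (v : D.V) : ℕ :=
  (S.filter fun e => D.src e = v).card + (S.filter fun e => D.tgt e = v).card

/-- `S` is a matching (pairwise non-adjacent edges). -/
def IsMatchingIn (D : Multigraph) (S : Finset D.E) : Prop := ∀ v : D.V, degIn D S v ≤ 1

/-- `S` is a path with three edges. -/
def IsPath3In (D : Multigraph) (S : Finset D.E) : Prop :=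
  S.card = 3 ∧ (∀ v : D.V, degIn D S v ≤ 2) ∧
    (Finset.univ.filter fun v : D.V => degIn D S v = 1).card = 2

/-- `S` is the disjoint union of a path with three edges and a single edge. -/
def IsPath3PlusEdgeIn (D : Multigraph) (S : Finset D.E) : Prop :=
  S.card = 4 ∧ (∀ v : D.V, degIn D S v ≤ 2) ∧
    (Finset.univ.filter fun v : D.V => degIn D S v = 1).card = 4 ∧
    ∃ e ∈ S, degIn D S (D.src e) = 2 ∧ degIn D S (D.tgt e) = 2

/-- `S` is the disjoint union of two paths with two edges each. -/
def IsTwoPlusTwoIn (D : Multigraph) (S : Finset D.E) : Prop :=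
  S.card = 4 ∧ (∀ v : D.V, degIn D S v ≤ 2) ∧
    (Finset.univ.filter fun v : D.V => degIn D S v = 1).card = 4 ∧
    ∀ e ∈ S, degIn D S (D.src e) = 1 ∨ degIn D S (D.tgt e) = 1

/-- Two edges sharing a vertex. -/
def AdjEdges (D : Multigraph) (a b : D.E) : Prop :=
  ∃ v : D.V, (D.src a = v ∨ D.tgt a = v) ∧ (D.src b = v ∨ D.tgt b = v)

/-- The number of incidences of edges of weight `c` at the vertex `u`. -/
def incCount (D : Multigraph) (w : D.E → ℕ) (u : D.V) (c : ℕ) : ℕ :=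
  (Finset.univ.filter fun e : D.E => D.src e = u ∧ w e = c).card +
    (Finset.univ.filter fun e : D.E => D.tgt e = u ∧ w e = c).card

/-- The `π^v`-value of the vertex `u`: the number of incident edges of weight `q + 1`
minus the number of incident edges of weight `q - 1`. -/
def piV (D : Multigraph) (w : D.E → ℕ) (q : ℕ) (u : D.V) : ℤ :=
  (incCount D w u (q + 1) : ℤ) -
    (if q = 0 then 0 else (incCount D w u (q - 1) : ℤ))

/-- The `π^v`-values are balanced: pairwise differences at most one. -/
def BalancedPiV (D : Multigraph) (w : D.E → ℕ) (q : ℕ) : Prop :=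
  ∀ u v : D.V, piV D w q u ≤ piV D w q v + 1

/-- The standard weight `q`, where `m = 3kq + r` with `-3k/2 < r ≤ 3k/2`. -/
def stdWeight (m k : ℕ) : ℕ := (2 * m + 3 * k - 1) / (6 * k)

/-- `w` is a balanced weighting of `D` of total size `m` (the implied weak
subdivision is the generic member of `ℬ_m(D)`). -/
def IsBalancedWeighting (D : Multigraph) (w : D.E → ℕ) (m : ℕ) : Prop :=
  (∑ e : D.E, w e) = m ∧ BalancedWeights w ∧ ZeroAcyclic D w

/-- Every 3-bond of `D` is trivial (consists of the three edges at a single vertex). -/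
def OnlyTrivialThreeBonds (D : Multigraph) : Prop :=
  ∀ F : Finset D.E, D.IsBond F → F.card = 3 →
    ∃ u : D.V, F = Finset.univ.filter fun e => D.src e = u ∨ D.tgt e = u

/-- The 3-dipole: two vertices joined by three parallel edges. -/
def dipole3 : Multigraph where
  V := Fin 2
  E := Fin 3
  src _ := 0
  tgt _ := 1

/-- The complete graph `K₄`. -/
def K4 : Multigraph where
  V := Fin 4
  E := {p : Fin 4 × Fin 4 // p.1 < p.2}
  src p := p.1.1
  tgt p := p.1.2

/-- The complete bipartite graph `K_{3,3}`. -/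
def K33 : Multigraph where
  V := Fin 3 ⊕ Fin 3
  E := Fin 3 × Fin 3
  src p := Sum.inl p.1
  tgt p := Sum.inr p.2

/-- The triangular prism `Π₃`; the edges `Sum.inr i` are the rungs. -/
def prism : Multigraph where
  V := Fin 3 × Bool
  E := (Fin 3 × Bool) ⊕ Fin 3
  src := fun e => match e with
    | Sum.inl (i, b) => (i, b)
    | Sum.inr i => (i, false)
  tgt := fun e => match e with
    | Sum.inl (i, b) => (i + 1, b)
    | Sum.inr i => (i, true)

/-- The Wagner graph (the 4-Möbius ladder): the edges `Sum.inl i` are the rails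
(the 8-cycle) and the edges `Sum.inr j` are the rungs. -/
def wagner : Multigraph where
  V := Fin 8
  E := Fin 8 ⊕ Fin 4
  src := fun e => match e with
    | Sum.inl i => i
    | Sum.inr j => ⟨j.val, by omega⟩
  tgt := fun e => match e with
    | Sum.inl i => i + 1
    | Sum.inr j => ⟨j.val + 4, by omega⟩

/-- The Petersen graph. -/
def petersen : Multigraph where
  V := Fin 5 × Bool
  E := Fin 5 ⊕ Fin 5 ⊕ Fin 5
  src := fun e => match e with
    | Sum.inl i => (i, false)
    | Sum.inr (Sum.inl i) => (i, false)
    | Sum.inr (Sum.inr i) => (i, true)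
  tgt := fun e => match e with
    | Sum.inl i => (i + 1, false)
    | Sum.inr (Sum.inl i) => (i, true)
    | Sum.inr (Sum.inr i) => (i + 2, true)

/-- The extra conditions (depending on m mod 6) specifying the optimal balanced weak
K₄-subdivision: for r = 2 the two longer chains form a matching; for r = −2 (i.e.
m % 6 = 4) the two shorter chains form a matching; for r = 3 the three longer chains
form a path with three edges. -/
def k4Cond (m : ℕ) (w : K4.E → ℕ) : Prop :=
  (m % 6 = 2 → IsMatchingIn K4 (maxChains K4 w)) ∧
  (m % 6 = 4 → IsMatchingIn K4 (minChains K4 w)) ∧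
  (m % 6 = 3 → IsPath3In K4 (maxChains K4 w))

/-!
Label the edges of a graph by vectors over `𝔽₂` whose linear relations are exactly the cuts. Then
deleting a set of edges leaves the graph connected if and only if its labels are linearly
independent, so the reliability is determined by the numbers of independent sets of each size, and
it suffices to maximize all of these simultaneously. For `m = n + 2` the labels lie in `𝔽₂³`. The
Fano plane is not cographic, hence some nonzero vector is not a label, and the other six nonzero
vectors label the edges of `K₄`. Replacing zero labels by nonzero ones only increases the counts, so
everything depends on the numbers `w c` of edges labelled by the edges `c` of `K₄`. The number of
independent pairs is largest when `∑ c, w c ^ 2` is least, i.e. when `w` is balanced. The number of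
independent triples is a cubic in `w` which for balanced `w` is largest when the sum of the squared
differences between the lengths of opposite chains is least. These `w` form a single orbit under
the automorphisms of `K₄`, and the graph can be recovered from its labels.
-/


namespace Multigraph

variable {H : Multigraph}

/-! ### The cut space -/

/-- The coboundary map over the field with two elements: it sends a potential on the vertices to
its differences along the edges. -/
def coboundary (H : Multigraph) : (H.V → ZMod 2) →ₗ[ZMod 2] (H.E → ZMod 2) where
  toFun x e := x (H.src e) + x (H.tgt e)
  map_add' x y := by ext e; simp only [Pi.add_apply]; ring
  map_smul' c x := by ext e; simp only [Pi.smul_apply, smul_eq_mul, RingHom.id_apply]; ring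

/-- The cut space over the field with two elements, spanned by the indicators of the cuts. -/
def cutSpace (H : Multigraph) : Submodule (ZMod 2) (H.E → ZMod 2) := LinearMap.range H.coboundary

theorem coboundary_apply (x : H.V → ZMod 2) (e : H.E) :
    H.coboundary x e = x (H.src e) + x (H.tgt e) := rfl

theorem coboundary_apply_eq_zero {x : H.V → ZMod 2} {e : H.E} :
    H.coboundary x e = 0 ↔ x (H.src e) = x (H.tgt e) := by
  rw [coboundary_apply]
  exact CharTwo.add_eq_zero

theorem coboundary_indicator (A : Finset H.V) :
    H.coboundary (fun v => if v ∈ A then 1 else 0) =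
      fun e => if e ∈ H.cutEdges A then 1 else 0 := by
  ext e
  by_cases hs : H.src e ∈ A <;> by_cases ht : H.tgt e ∈ A <;>
    simp [coboundary_apply, cutEdges, hs, ht, CharTwo.add_self_eq_zero]

theorem eq_indicator {α : Type*} [Fintype α] (y : α → ZMod 2) :
    y = fun a => if a ∈ univ.filter fun a => y a ≠ 0 then 1 else 0 := by
  have h : ∀ t : ZMod 2, t = if t ≠ 0 then 1 else 0 := by decide
  ext a
  simpa only [mem_filter, mem_univ, true_and] using h (y a)

theorem connOn_iff_forall_potential (S : Finset H.E) :
    H.ConnOn S ↔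
      ∀ x : H.V → ZMod 2, (∀ e ∈ S, x (H.src e) = x (H.tgt e)) → ∀ u v, x u = x v := by
  constructor
  · intro h x hx u v
    induction h u v with
    | refl => rfl
    | tail _ hs ih =>
      rw [ih]
      obtain ⟨e, he, ⟨rfl, rfl⟩ | ⟨rfl, rfl⟩⟩ := hs
      · exact hx e he
      · exact (hx e he).symm
  · intro h u v
    -- The indicator of the component of `u` is constant along the edges of `S`.
    have hcomp := h (fun y => if Relation.ReflTransGen (H.stepOn S) u y then 1 else 0)
      (fun e he => by
        have : Relation.ReflTransGen (H.stepOn S) u (H.src e) ↔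
            Relation.ReflTransGen (H.stepOn S) u (H.tgt e) :=
          ⟨fun k => k.tail ⟨e, he, Or.inl ⟨rfl, rfl⟩⟩, fun k => k.tail ⟨e, he, Or.inr ⟨rfl, rfl⟩⟩⟩
        simp only [this]) u v
    by_contra hv
    simp only [Relation.ReflTransGen.refl, hv, if_true, if_false, one_ne_zero] at hcomp

theorem connected_iff_forall_potential :
    H.Connected ↔ ∀ x : H.V → ZMod 2, H.coboundary x = 0 → ∀ u v, x u = x v := by
  simp only [Connected, connOn_iff_forall_potential, mem_univ, forall_const, funext_iff,
    Pi.zero_apply, coboundary_apply_eq_zero]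

theorem Connected.connOn_iff (hH : H.Connected) (S : Finset H.E) :
    H.ConnOn S ↔ ∀ x : H.V → ZMod 2, (∀ e ∈ S, H.coboundary x e = 0) → H.coboundary x = 0 := by
  simp only [connOn_iff_forall_potential, ← coboundary_apply_eq_zero]
  refine ⟨fun h x hx => ?_, fun h x hx => connected_iff_forall_potential.1 hH x (h x hx)⟩
  ext e
  exact coboundary_apply_eq_zero.2 (h x hx _ _)

theorem finrank_cutSpace (hH : H.Connected) [Nonempty H.V] :
    Module.finrank (ZMod 2) H.cutSpace + 1 = H.nV := by
  have hker : Module.finrank (ZMod 2) (LinearMap.ker H.coboundary) = 1 := by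
    have hone : (1 : H.V → ZMod 2) ∈ LinearMap.ker H.coboundary := by
      ext e
      exact coboundary_apply_eq_zero.2 rfl
    obtain ⟨v⟩ := ‹Nonempty H.V›
    refine finrank_eq_one ⟨1, hone⟩ (fun h => ?_) fun ⟨x, hx⟩ => ⟨x v, ?_⟩
    · exact one_ne_zero (congrFun (congrArg Subtype.val h) v)
    · ext u
      simpa using connected_iff_forall_potential.1 hH x hx v u
  have hrank := LinearMap.finrank_range_add_finrank_ker H.coboundary
  rwa [hker, Module.finrank_fintype_fun_eq_card] at hrank

theorem mem_cutEdges {A : Finset H.V} {e : H.E} :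
    e ∈ H.cutEdges A ↔ (H.src e ∈ A ↔ H.tgt e ∉ A) := by
  simp only [cutEdges, mem_filter, mem_univ, true_and]
  tauto

theorem sum_card_cutEdges_singleton_le (H : Multigraph) :
    ∑ v, #(H.cutEdges {v}) ≤ 2 * H.nE := by
  have hends (e : H.E) : #(univ.filter fun v => e ∈ H.cutEdges {v}) ≤ 2 := by
    refine (card_le_card fun v hv => ?_).trans (card_le_two (a := H.src e) (b := H.tgt e))
    simp only [mem_filter, mem_univ, true_and, mem_cutEdges, mem_singleton] at hv
    simp only [mem_insert, mem_singleton]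
    tauto
  calc ∑ v, #(H.cutEdges {v}) = ∑ e, #(univ.filter fun v => e ∈ H.cutEdges {v}) := by
        simpa only [bipartiteAbove, bipartiteBelow, filter_univ_mem] using
          sum_card_bipartiteAbove_eq_sum_card_bipartiteBelow (s := univ) (t := univ)
            fun (v : H.V) (e : H.E) => e ∈ H.cutEdges {v}
    _ ≤ ∑ _e : H.E, 2 := sum_le_sum fun e _ => hends e
    _ = 2 * H.nE := by simp [nE, mul_comm]

theorem Connected.eq_empty_or_univ_of_cutEdges (hH : H.Connected) {A : Finset H.V}
    (hA : H.cutEdges A = ∅) : A = ∅ ∨ A = univ := by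
  have hconst := connected_iff_forall_potential.1 hH (fun v => if v ∈ A then 1 else 0) (by
    simp only [coboundary_indicator, hA, notMem_empty, if_false]
    rfl)
  refine A.eq_empty_or_nonempty.imp_right fun ⟨v, hv⟩ => eq_univ_of_forall fun u => ?_
  by_contra hu
  simpa [hv, hu] using hconst v u

end Multigraph

namespace Multigraph

variable {H D : Multigraph} {M N : Type*} [AddCommGroup M] [Module (ZMod 2) M] [AddCommGroup N]
  [Module (ZMod 2) N] {ℓ : H.E → M}

/-! ### Representations of the cographic matroid -/

/-- A labelling of the edges by vectors over the field with two elements whose linear relations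
are exactly the cuts: a representation of the cographic matroid of `H`. -/
def IsCographicRep (H : Multigraph) (ℓ : H.E → M) : Prop :=
  LinearMap.ker (Fintype.linearCombination (ZMod 2) ℓ) = H.cutSpace

theorem isCographicRep_iff :
    H.IsCographicRep ℓ ↔
      ∀ y : H.E → ZMod 2, ∑ e, y e • ℓ e = 0 ↔ ∃ x, H.coboundary x = y := by
  simp only [IsCographicRep, SetLike.ext_iff, LinearMap.mem_ker, Fintype.linearCombination_apply,
    cutSpace, LinearMap.mem_range]

theorem IsCographicRep.sum_eq_zero_iff (h : H.IsCographicRep ℓ) (F : Finset H.E) :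
    ∑ e ∈ F, ℓ e = 0 ↔ ∃ A, H.cutEdges A = F := by
  have hsum : ∑ e, (if e ∈ F then 1 else 0 : ZMod 2) • ℓ e = ∑ e ∈ F, ℓ e := by
    simp only [ite_smul, one_smul, zero_smul, sum_ite_mem, univ_inter]
  rw [← hsum, isCographicRep_iff.1 h]
  constructor
  · rintro ⟨x, hx⟩
    rw [eq_indicator x, coboundary_indicator] at hx
    refine ⟨univ.filter fun v => x v ≠ 0, ?_⟩
    ext e
    have he := congrFun hx e
    split_ifs at he <;> simp_all
  · rintro ⟨A, rfl⟩
    exact ⟨_, coboundary_indicator A⟩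

theorem IsCographicRep.sum_cutEdges (h : H.IsCographicRep ℓ) (A : Finset H.V) :
    ∑ e ∈ H.cutEdges A, ℓ e = 0 :=
  (h.sum_eq_zero_iff _).2 ⟨A, rfl⟩

theorem IsCographicRep.src_ne_tgt (h : H.IsCographicRep ℓ) {F : Finset H.E}
    (hF : ∑ e ∈ F, ℓ e = 0) {e : H.E} (he : e ∈ F) : H.src e ≠ H.tgt e := by
  obtain ⟨A, rfl⟩ := (h.sum_eq_zero_iff F).1 hF
  rw [mem_cutEdges] at he
  intro hloop
  rw [hloop] at he
  exact iff_not_self he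

theorem exists_isCographicRep (hH : H.Connected) [Nonempty H.V] [Module.Finite (ZMod 2) M]
    (hM : H.nE + 1 = H.nV + Module.finrank (ZMod 2) M) : ∃ ℓ : H.E → M, H.IsCographicRep ℓ := by
  have hcut := finrank_cutSpace hH
  have hquot := Submodule.finrank_quotient_add_finrank H.cutSpace
  rw [Module.finrank_fintype_fun_eq_card] at hquot
  let φ : ((H.E → ZMod 2) ⧸ H.cutSpace) ≃ₗ[ZMod 2] M :=
    LinearEquiv.ofFinrankEq _ _ (by simp only [nE] at hM; omega)
  refine ⟨fun e => φ (H.cutSpace.mkQ (Pi.single e 1)), ?_⟩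
  have hcomb : Fintype.linearCombination (ZMod 2)
      (fun e => φ (H.cutSpace.mkQ (Pi.single e 1))) = φ.toLinearMap ∘ₗ H.cutSpace.mkQ := by
    ext e
    simp [Fintype.linearCombination_apply_single]
  rw [IsCographicRep, hcomb, LinearEquiv.ker_comp, Submodule.ker_mkQ]

theorem IsCographicRep.connOn_sdiff_iff (h : H.IsCographicRep ℓ) (hH : H.Connected)
    (F : Finset H.E) : H.ConnOn (univ \ F) ↔ LinearIndepOn (ZMod 2) ℓ F := by
  rw [hH.connOn_iff, linearIndepOn_finset_iff]
  constructor
  · intro hconn y hy e he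
    obtain ⟨x, hx⟩ := (isCographicRep_iff.1 h fun e => if e ∈ F then y e else 0).1 (by
      simpa only [ite_smul, zero_smul, sum_ite_mem, univ_inter] using hy)
    have hx0 := hconn x fun f hf => by
      simp only [hx, (mem_sdiff.1 hf).2, if_false]
    simpa [hx, he] using congrFun hx0 e
  · intro hind x hx
    have hsum : ∑ e ∈ F, H.coboundary x e • ℓ e = 0 := by
      rw [← (isCographicRep_iff.1 h _).2 ⟨x, rfl⟩]
      refine sum_subset (subset_univ F) fun e _ he => ?_
      rw [hx e (mem_sdiff.2 ⟨mem_univ e, he⟩), zero_smul]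
    ext e
    by_cases he : e ∈ F
    · exact hind _ hsum e he
    · exact hx e (mem_sdiff.2 ⟨mem_univ e, he⟩)

theorem IsCographicRep.nE_add_one (h : H.IsCographicRep ℓ) (hH : H.Connected) [Nonempty H.V] :
    H.nE + 1 = H.nV + Module.finrank (ZMod 2) (Submodule.span (ZMod 2) (Set.range ℓ)) := by
  have hrank := LinearMap.finrank_range_add_finrank_ker (Fintype.linearCombination (ZMod 2) ℓ)
  rw [h, Module.finrank_fintype_fun_eq_card, Fintype.range_linearCombination] at hrank
  have hcut := finrank_cutSpace hH
  simp only [nE] at *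
  omega

theorem IsCographicRep.comp_iso {G : Multigraph} (h : H.IsCographicRep ℓ) (φ : MGIso G H) :
    G.IsCographicRep (ℓ ∘ φ.eMap) := by
  have hcob (x : H.V → ZMod 2) (e : G.E) :
      G.coboundary (x ∘ φ.vMap) e = H.coboundary x (φ.eMap e) := by
    rcases φ.ends_eq e with ⟨hs, ht⟩ | ⟨hs, ht⟩ <;>
      simp only [coboundary_apply, Function.comp_apply, hs, ht, add_comm]
  refine isCographicRep_iff.2 fun y => ?_
  have hsum : ∑ e, y e • (ℓ ∘ φ.eMap) e = ∑ e, (y ∘ φ.eMap.symm) e • ℓ e :=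
    Fintype.sum_equiv φ.eMap _ _ fun e => by simp
  rw [hsum, isCographicRep_iff.1 h]
  constructor
  · rintro ⟨x, hx⟩
    exact ⟨x ∘ φ.vMap, funext fun e => by simp [hcob, hx]⟩
  · rintro ⟨x, rfl⟩
    refine ⟨x ∘ φ.vMap.symm, funext fun e => ?_⟩
    have := hcob (x ∘ φ.vMap.symm) (φ.eMap.symm e)
    rw [Equiv.apply_symm_apply] at this
    rw [← this, Function.comp_assoc, Equiv.symm_comp_self, Function.comp_id, Function.comp_apply]

theorem sum_smul_comp_eq_sum_fiberwise {α β : Type*} [Fintype α] [Fintype β] (κ : α → β)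
    (R : β → M) (y : α → ZMod 2) :
    ∑ a, y a • (R ∘ κ) a = ∑ b, (∑ a with κ a = b, y a) • R b := by
  simp only [sum_smul, Function.comp_apply]
  rw [← sum_fiberwise univ κ]
  exact sum_congr rfl fun b _ => sum_congr rfl fun a ha => by rw [(mem_filter.1 ha).2]

theorem IsCographicRep.comp_congr {P : D.E → M} {Q : D.E → N} (hP : D.IsCographicRep P)
    (hQ : D.IsCographicRep Q) {κ : H.E → D.E} (h : H.IsCographicRep (P ∘ κ)) :
    H.IsCographicRep (Q ∘ κ) := by
  refine isCographicRep_iff.2 fun y => ?_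
  rw [← isCographicRep_iff.1 h, sum_smul_comp_eq_sum_fiberwise, sum_smul_comp_eq_sum_fiberwise,
    isCographicRep_iff.1 hP, isCographicRep_iff.1 hQ]

end Multigraph

namespace Multigraph

variable {H D : Multigraph} {M : Type*} [AddCommGroup M] [Module (ZMod 2) M] {ℓ : H.E → M}

/-! ### Contractions -/

/-- The graph with edge set `S` obtained from `H` by mapping its vertices along `r`; it is a
contraction of `H` if `r` satisfies `Contracts`. -/
def mapVertices (H : Multigraph) {W : Type} [Fintype W] (r : H.V → W) (S : Finset H.E) :
    Multigraph where
  V := W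
  E := {e // e ∈ S}
  src e := r (H.src e)
  tgt e := r (H.tgt e)

/-- The map `r` on vertices contracts exactly the edges outside `S`, expressed by potentials: those
that are constant along the edges outside `S` are the pullbacks along `r`. -/
def Contracts (H : Multigraph) {W : Type} (r : H.V → W) (S : Finset H.E) : Prop :=
  ∀ x : H.V → ZMod 2, (∀ e ∉ S, H.coboundary x e = 0) ↔ ∃ z : W → ZMod 2, x = z ∘ r

variable {W : Type} [Fintype W] {r : H.V → W} {S : Finset H.E}

theorem IsCographicRep.mapVertices (h : H.IsCographicRep ℓ) (hr : H.Contracts r S) :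
    (H.mapVertices r S).IsCographicRep fun e => ℓ e.1 := by
  refine isCographicRep_iff.2 fun y => ?_
  have hsum : ∑ e : {e // e ∈ S}, y e • ℓ e.1
      = ∑ e, (if he : e ∈ S then y ⟨e, he⟩ else 0) • ℓ e := by
    rw [← sum_subset (subset_univ S) fun e _ he => by rw [dif_neg he, zero_smul],
      ← sum_coe_sort S]
    exact sum_congr rfl fun e _ => by rw [dif_pos e.2]
  refine (hsum ▸ isCographicRep_iff.1 h _ :
    ∑ e : {e // e ∈ S}, y e • ℓ e.1 = 0 ↔ _).trans ⟨?_, ?_⟩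
  · rintro ⟨x, hx⟩
    obtain ⟨z, rfl⟩ := (hr x).1 fun e he => by simp only [hx, he, dif_neg, not_false_eq_true]
    exact ⟨z, funext fun e => (congrFun hx e.1).trans (dif_pos e.2)⟩
  · rintro ⟨z, rfl⟩
    refine ⟨z ∘ r, funext fun e => ?_⟩
    split_ifs with he
    · rfl
    · exact (hr _).2 ⟨z, rfl⟩ e he

theorem Connected.mapVertices (hH : H.Connected) (hr : H.Contracts r S)
    (hsurj : Function.Surjective r) : (H.mapVertices r S).Connected := by
  refine connected_iff_forall_potential.2 fun z hz => hsurj.forall₂.2 fun u v => ?_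
  refine connected_iff_forall_potential.1 hH (z ∘ r) (funext fun e => ?_) u v
  by_cases he : e ∈ S
  · exact congrFun hz ⟨e, he⟩
  · exact (hr _).2 ⟨z, rfl⟩ e he

theorem contracts_quot (H : Multigraph) (S : Finset H.E) :
    H.Contracts (Quot.mk fun u v => ∃ e ∉ S, H.src e = u ∧ H.tgt e = v) S := by
  refine fun x => ⟨fun hx => ⟨Quot.lift x ?_, rfl⟩, ?_⟩
  · rintro _ _ ⟨e, he, rfl, rfl⟩
    exact coboundary_apply_eq_zero.1 (hx e he)
  · rintro ⟨z, rfl⟩ e he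
    exact coboundary_apply_eq_zero.2 (congrArg z (Quot.sound ⟨e, he, rfl, rfl⟩))

/-! ### Subdivisions -/

theorem chainNode_zero (w : D.E → ℕ) (e : D.E) :
    chainNode D w e 0 = Sum.inl (Quot.mk _ (D.src e)) := by
  simp [chainNode]

theorem chainNode_length (w : D.E → ℕ) (e : D.E) :
    chainNode D w e (w e) = Sum.inl (Quot.mk _ (D.tgt e)) := by
  by_cases hw : w e = 0
  · rw [hw, chainNode_zero]
    exact congrArg Sum.inl (Quot.sound ⟨e, hw, rfl, rfl⟩)
  · simp [chainNode, hw]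

theorem chainNode_succ (w : D.E → ℕ) (e : D.E) (i : Fin (w e - 1)) :
    chainNode D w e (i + 1) = Sum.inr ⟨e, i⟩ := by
  have : i + 1 < w e := by omega
  simp [chainNode, this]

theorem sum_range_add_succ (f : ℕ → ZMod 2) (k : ℕ) :
    ∑ i ∈ range k, (f i + f (i + 1)) = f 0 + f k := by
  simpa only [CharTwo.sub_eq_add, add_comm] using sum_range_sub f k

theorem sum_coboundary_chain (w : D.E → ℕ) (x : (subdivide D w).V → ZMod 2) (e : D.E) :
    ∑ i : Fin (w e), (subdivide D w).coboundary x ⟨e, i⟩ =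
      D.coboundary (fun v => x (Sum.inl (Quot.mk _ v))) e := by
  rw [coboundary_apply, ← chainNode_zero, ← chainNode_length,
    ← sum_range_add_succ fun k => x (chainNode D w e k), ← Fin.sum_univ_eq_sum_range]
  rfl

theorem exists_coboundary_subdivide (w : D.E → ℕ) (y : (subdivide D w).E → ZMod 2)
    (x : D.V → ZMod 2) (hx : ∀ e, D.coboundary x e = ∑ i : Fin (w e), y ⟨e, i⟩) :
    ∃ z, (subdivide D w).coboundary z = y := by
  let s (e : D.E) (k : ℕ) : ZMod 2 :=
    ∑ j ∈ range k, if hj : j < w e then y ⟨e, ⟨j, hj⟩⟩ else 0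
  have hs_length (e : D.E) : x (D.tgt e) = x (D.src e) + s e (w e) := by
    have hsum : s e (w e) = ∑ i : Fin (w e), y ⟨e, i⟩ := by
      simp only [s, ← Fin.sum_univ_eq_sum_range, Fin.is_lt, dite_true]
    rw [hsum, ← hx, coboundary_apply, CharTwo.add_cancel_left]
  have hcompat (u v : D.V) : zeroRel D w u v → x u = x v := by
    rintro ⟨e, he, rfl, rfl⟩
    rw [hs_length, he]
    exact (add_zero _).symm
  let z : (subdivide D w).V → ZMod 2 :=
    Sum.elim (Quot.lift x hcompat) fun p => x (D.src p.1) + s p.1 (p.2 + 1)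
  have hz (e : D.E) (j : ℕ) (hj : j ≤ w e) : z (chainNode D w e j) = x (D.src e) + s e j := by
    rcases j with _ | j
    · simp [z, s, chainNode_zero]
    · rcases hj.lt_or_eq with hlt | heq
      · rw [chainNode_succ w e ⟨j, by omega⟩]
        rfl
      · rw [heq, chainNode_length, ← hs_length]
        rfl
  refine ⟨z, funext fun ⟨e, i⟩ => ?_⟩
  change z (chainNode D w e i) + z (chainNode D w e (i + 1)) = _
  rw [hz e i i.2.le, hz e (i + 1) i.2, add_add_add_comm, CharTwo.add_self_eq_zero,
    zero_add]
  simp [s, sum_range_succ, i.2, CharTwo.add_cancel_left]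

theorem isCographicRep_subdivide {P : D.E → M} (hP : D.IsCographicRep P) (w : D.E → ℕ) :
    (subdivide D w).IsCographicRep (P ∘ Sigma.fst : (subdivide D w).E → M) := by
  refine isCographicRep_iff.2 fun y => ?_
  have hsum : ∑ e : (subdivide D w).E, y e • (P ∘ Sigma.fst : (subdivide D w).E → M) e =
      ∑ e, (∑ i : Fin (w e), y ⟨e, i⟩) • P e := by
    simp only [sum_smul]
    exact Fintype.sum_sigma _
  rw [hsum, isCographicRep_iff.1 hP fun e => ∑ i : Fin (w e), y ⟨e, i⟩]
  constructor
  · rintro ⟨x, hx⟩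
    exact exists_coboundary_subdivide w y x fun e => congrFun hx e
  · rintro ⟨x, rfl⟩
    exact ⟨_, funext fun e => (sum_coboundary_chain w x e).symm⟩

theorem Connected.subdivide (hD : D.Connected) (w : D.E → ℕ) : (subdivide D w).Connected := by
  refine connected_iff_forall_potential.2 fun x hx => ?_
  have hconst := connected_iff_forall_potential.1 hD (fun v => x (Sum.inl (Quot.mk _ v)))
    (funext fun e => by rw [← sum_coboundary_chain, hx]; exact sum_const_zero)
  have hchain (e : D.E) (j : ℕ) (hj : j ≤ w e) :
      x (chainNode D w e j) = x (Sum.inl (Quot.mk _ (D.src e))) := by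
    induction j with
    | zero => rw [chainNode_zero]
    | succ j ih =>
      rw [← ih (by omega)]
      exact (coboundary_apply_eq_zero.1 (congrFun hx ⟨e, ⟨j, hj⟩⟩)).symm
  have hbranch (u : (_root_.subdivide D w).V) : ∃ v, x u = x (Sum.inl (Quot.mk _ v)) := by
    rcases u with ⟨⟨v⟩⟩ | ⟨e, i⟩
    · exact ⟨v, rfl⟩
    · exact ⟨D.src e, by rw [← chainNode_succ, hchain e _ (by omega)]⟩
  intro u v
  obtain ⟨u', hu⟩ := hbranch u
  obtain ⟨v', hv⟩ := hbranch v
  rw [hu, hv, hconst u' v']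

end Multigraph

namespace Multigraph

variable {H : Multigraph} {M : Type*} [AddCommGroup M] [Module (ZMod 2) M] {ℓ : H.E → M}

/-! ### Graphs of exceedance two are labelled by the edges of `K₄` -/

theorem three_le_card_of_sum_eq_zero {α : Type*} {f : α → M} {F : Finset α} (hF : F.Nonempty)
    (hinj : Set.InjOn f F) (hne : ∀ a ∈ F, f a ≠ 0) (hsum : ∑ a ∈ F, f a = 0) : 3 ≤ #F := by
  by_contra! hlt
  have hpos := hF.card_pos
  obtain h1 | h2 : #F = 1 ∨ #F = 2 := by omega
  · obtain ⟨a, rfl⟩ := card_eq_one.1 h1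
    exact hne a (mem_singleton_self a) (by simpa using hsum)
  · obtain ⟨a, b, hab, rfl⟩ := card_eq_two.1 h2
    rw [sum_pair hab, ← ZModModule.sub_eq_add, sub_eq_zero] at hsum
    exact hab (hinj (by simp) (by simp) hsum)

theorem Connected.cutEdges_singleton_nonempty (hH : H.Connected) (hV : 2 ≤ H.nV) (v : H.V) :
    (H.cutEdges {v}).Nonempty := by
  by_contra! hempty
  rcases hH.eq_empty_or_univ_of_cutEdges hempty with h | h
  · exact singleton_ne_empty v h
  · have hcard := congrArg card h
    rw [card_singleton, card_univ] at hcard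
    rw [nV] at hV
    omega

theorem IsCographicRep.three_le_card_cutEdges_singleton (h : H.IsCographicRep ℓ)
    (hH : H.Connected) (hV : 2 ≤ H.nV) (hinj : Function.Injective ℓ) (hne : ∀ e, ℓ e ≠ 0)
    (v : H.V) : 3 ≤ #(H.cutEdges {v}) :=
  three_le_card_of_sum_eq_zero (hH.cutEdges_singleton_nonempty hV v) hinj.injOn (fun e _ => hne e)
    (h.sum_cutEdges {v})

/-- The space `𝔽₂³` in which the cographic matroids of exceedance two are represented. -/
abbrev LabelSpace : Type := ZMod 2 × ZMod 2 × ZMod 2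

theorem finrank_labelSpace : Module.finrank (ZMod 2) LabelSpace = 3 := by
  simp [LabelSpace]

-- Otherwise contracting all but one edge of each label gives a representation of the Fano plane
-- by the bonds of a graph with 7 edges and 5 vertices, all of whose degrees would be at least 3.
theorem IsCographicRep.exists_ne_zero_notMem_range {ℓ : H.E → LabelSpace}
    (h : H.IsCographicRep ℓ) (hH : H.Connected) [Nonempty H.V] : ∃ z ≠ 0, z ∉ Set.range ℓ := by
  by_contra! hall
  choose s hs using fun z : {z : LabelSpace // z ≠ 0} => hall z.1 z.2
  have hs_inj : Function.Injective s := fun a b hab => Subtype.ext (by rw [← hs, hab, hs])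
  let S : Finset H.E := univ.map ⟨s, hs_inj⟩
  have hS (e : {e // e ∈ S}) : ∃ z, s z = e := by
    obtain ⟨z, -, hz⟩ := mem_map.1 e.2
    exact ⟨z, hz⟩
  have hquot := contracts_quot H S
  let K := H.mapVertices (Quot.mk fun u v => ∃ e ∉ S, H.src e = u ∧ H.tgt e = v) S
  have hK : K.IsCographicRep fun e => ℓ e.1 := h.mapVertices hquot
  have hconn : K.Connected := hH.mapVertices hquot Quot.mk_surjective
  have hKE : K.nE = 7 := by
    change Fintype.card {e // e ∈ S} = 7
    rw [Fintype.card_coe, card_map]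
    decide
  have : Nonempty K.V := Nonempty.map (Quot.mk _) ‹_›
  have hrank := hK.nE_add_one hconn
  have hspan := Submodule.finrank_le (Submodule.span (ZMod 2) (Set.range fun e : K.E => ℓ e.1))
  rw [finrank_labelSpace] at hspan
  have hdeg (v : K.V) : 3 ≤ #(K.cutEdges {v}) := by
    refine hK.three_le_card_cutEdges_singleton hconn (by omega) (fun e f hef => ?_) (fun e => ?_) v
    · obtain ⟨a, ha⟩ := hS e
      obtain ⟨b, hb⟩ := hS f
      have hab : ℓ e.1 = ℓ f.1 := hef
      rw [← ha, ← hb, hs, hs] at hab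
      exact Subtype.ext (ha.symm.trans ((congrArg s (Subtype.ext hab)).trans hb))
    · obtain ⟨a, ha⟩ := hS e
      rw [← ha, hs]
      exact a.2
  have hsum := (sum_le_sum fun v _ => hdeg v).trans K.sum_card_cutEdges_singleton_le
  rw [sum_const, smul_eq_mul, card_univ, ← nV] at hsum
  omega

theorem exists_linearEquiv_apply_eq {K V : Type*} [Field K] [AddCommGroup V] [Module K V]
    {v w : V} (hv : v ≠ 0) (hw : w ≠ 0) : ∃ g : V ≃ₗ[K] V, g v = w := by
  let f := (LinearEquiv.toSpanNonzeroSingleton K V v hv).symm.trans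
    (LinearEquiv.toSpanNonzeroSingleton K V w hw)
  obtain ⟨g, hg⟩ := Submodule.exists_linearEquiv_restrict_eq f
  refine ⟨g, (hg ⟨v, Submodule.mem_span_singleton_self v⟩).symm.trans ?_⟩
  rw [LinearEquiv.trans_apply, ← LinearEquiv.toSpanNonzeroSingleton_one K V v hv,
    LinearEquiv.symm_apply_apply, LinearEquiv.toSpanNonzeroSingleton_one]

theorem exists_isCographicRep_ne (hH : H.Connected) [Nonempty H.V] (hm : H.nE = H.nV + 2)
    {z : LabelSpace} (hz : z ≠ 0) :
    ∃ ℓ : H.E → LabelSpace, H.IsCographicRep ℓ ∧ ∀ e, ℓ e ≠ z := by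
  obtain ⟨ℓ, h⟩ := exists_isCographicRep (M := LabelSpace) hH (by rw [finrank_labelSpace, hm])
  obtain ⟨y, hy, hyℓ⟩ := h.exists_ne_zero_notMem_range hH
  obtain ⟨g, rfl⟩ := exists_linearEquiv_apply_eq (K := ZMod 2) hy hz
  refine ⟨g ∘ ℓ, ?_, fun e he => hyℓ ⟨e, g.injective he⟩⟩
  have hcomb : Fintype.linearCombination (ZMod 2) (g ∘ ℓ) =
      g.toLinearMap ∘ₗ Fintype.linearCombination (ZMod 2) ℓ := by
    refine LinearMap.ext fun y => ?_
    simp [Fintype.linearCombination_apply]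
  rw [IsCographicRep, hcomb, LinearEquiv.ker_comp]
  exact h

end Multigraph

namespace K4

/-- The edge `01` of `K₄`. -/
def e01 : K4.E := ⟨(0, 1), by decide⟩

/-- The edge `02` of `K₄`. -/
def e02 : K4.E := ⟨(0, 2), by decide⟩

/-- The edge `03` of `K₄`. -/
def e03 : K4.E := ⟨(0, 3), by decide⟩

/-- The edge `12` of `K₄`. -/
def e12 : K4.E := ⟨(1, 2), by decide⟩

/-- The edge `13` of `K₄`. -/
def e13 : K4.E := ⟨(1, 3), by decide⟩

/-- The edge `23` of `K₄`. -/
def e23 : K4.E := ⟨(2, 3), by decide⟩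

theorem univ_val_eq : (univ : Finset K4.E).val = ↑[e01, e02, e03, e12, e13, e23] := rfl

theorem forall_edges {p : K4.E → Prop} :
    (∀ e, p e) ↔ p e01 ∧ p e02 ∧ p e03 ∧ p e12 ∧ p e13 ∧ p e23 := by
  have h : ∀ e : K4.E, e ∈ (univ : Finset K4.E).val := mem_univ
  rw [univ_val_eq] at h
  simp only [Multiset.mem_coe, List.mem_cons, List.not_mem_nil, or_false] at h
  refine ⟨fun hp => ⟨hp _, hp _, hp _, hp _, hp _, hp _⟩, fun hp e => ?_⟩
  rcases h e with rfl | rfl | rfl | rfl | rfl | rfl <;> tauto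

theorem sum_edges {A : Type*} [AddCommMonoid A] (f : K4.E → A) :
    ∑ e, f e = f e01 + f e02 + f e03 + f e12 + f e13 + f e23 := by
  rw [Finset.sum, univ_val_eq]
  simp [add_assoc]

/-- The representation of the cographic matroid of `K₄` by the nonzero vectors of `𝔽₂³` other than
`(1, 1, 1)`. The labels of the triangle `012` form the standard basis, and the labels of the
edges at a vertex sum to zero. -/
def label (e : K4.E) : Multigraph.LabelSpace :=
  (![![0, (1, 0, 0), (0, 1, 0), (1, 1, 0)], ![0, 0, (0, 0, 1), (1, 0, 1)],
    ![0, 0, 0, (0, 1, 1)], 0] : Fin 4 → Fin 4 → Multigraph.LabelSpace) e.1.1 e.1.2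

theorem exists_label_eq : ∀ z : Multigraph.LabelSpace, z ≠ 0 → z ≠ (1, 1, 1) →
    ∃ e, label e = z := by
  decide

theorem label_injective : Function.Injective label := by
  have h : ∀ e f : K4.E, label e = label f → e.1 = f.1 := by decide
  exact fun e f hef => Subtype.ext (h e f hef)

theorem sum_smul_label_eq_zero_iff (y : K4.E → ZMod 2) :
    ∑ e, y e • label e = 0 ↔
      y e12 = y e01 + y e02 ∧ y e13 = y e01 + y e03 ∧ y e23 = y e02 + y e03 := by
  have h : ∀ a b c d e f : ZMod 2,
      a • label e01 + b • label e02 + c • label e03 + d • label e12 + e • label e13 +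
        f • label e23 = 0 ↔ d = a + b ∧ e = a + c ∧ f = b + c := by decide
  rw [sum_edges]
  exact h _ _ _ _ _ _

theorem isCographicRep_label : K4.IsCographicRep label := by
  refine Multigraph.isCographicRep_iff.2 fun y => ?_
  rw [sum_smul_label_eq_zero_iff]
  constructor
  · rintro ⟨h12, h13, h23⟩
    refine ⟨![0, y e01, y e02, y e03], funext (forall_edges.2 ?_)⟩
    rw [h12, h13, h23]
    exact ⟨zero_add _, zero_add _, zero_add _, rfl, rfl, rfl⟩
  · rintro ⟨x, rfl⟩
    have hsum (a b c : ZMod 2) : a + b = (c + a) + (c + b) := by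
      rw [add_add_add_comm, CharTwo.add_self_eq_zero, zero_add]
    exact ⟨hsum _ _ _, hsum _ _ _, hsum _ _ _⟩

theorem connected : K4.Connected := by
  refine Multigraph.connected_iff_forall_potential.2 fun x hx => ?_
  have h0 : ∀ v, x v = x (0 : Fin 4) := by
    have h (e : K4.E) := (Multigraph.coboundary_apply_eq_zero.1 (congrFun hx e)).symm
    exact Fin.forall_fin_succ.2
      ⟨rfl, Fin.forall_fin_succ.2 ⟨h e01, Fin.forall_fin_two.2 ⟨h e02, h e03⟩⟩⟩
  exact fun u v => (h0 u).trans (h0 v).symm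

end K4

namespace Multigraph

variable {G H D : Multigraph} {M : Type*} [AddCommGroup M] [Module (ZMod 2) M]

/-! ### Counting connected spanning subgraphs -/

/-- The number of sets of `i` edges whose deletion leaves `H` connected. -/
def connCount (H : Multigraph) (i : ℕ) : ℕ :=
  #(univ.filter fun F : Finset H.E => #F = i ∧ H.ConnOn (univ \ F))

theorem rel_eq_sum_connCount (H : Multigraph) (p : ℝ) :
    H.rel p = ∑ i ∈ range (H.nE + 1), (H.connCount i : ℝ) * (p ^ (H.nE - i) * (1 - p) ^ i) := by
  have hcard (F : Finset H.E) : #F ≤ H.nE := card_le_univ F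
  have hcompl (S : Finset H.E) : #(univ \ S) = H.nE - #S := card_univ_sdiff S
  calc H.rel p
      = ∑ F : Finset H.E,
          if H.ConnOn (univ \ F) then p ^ (H.nE - #F) * (1 - p) ^ #F else 0 := by
        refine sum_bij' (fun S _ => univ \ S) (fun F _ => univ \ F) (by simp) (by simp) (by simp)
          (by simp) fun S _ => ?_
        rw [hcompl, Nat.sub_sub_self (hcard S), Finset.sdiff_sdiff_eq_self (subset_univ S)]
    _ = ∑ i ∈ range (H.nE + 1), ∑ F : Finset H.E with #F = i,
          if H.ConnOn (univ \ F) then p ^ (H.nE - #F) * (1 - p) ^ #F else 0 :=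
        (sum_fiberwise_of_maps_to
          (fun F _ => mem_range.2 (Nat.lt_succ_of_le (hcard F))) _).symm
    _ = _ := sum_congr rfl fun i _ => by
        rw [← sum_filter, filter_filter, connCount, ← nsmul_eq_mul, ← sum_const]
        exact sum_congr rfl fun F hF => by rw [(mem_filter.1 hF).2.1]

theorem rel_lt_rel {p : ℝ} (hp₀ : 0 < p) (hp₁ : p < 1) (hE : H.nE = G.nE)
    (hle : ∀ i, H.connCount i ≤ G.connCount i) (hlt : ∃ i ≤ G.nE, H.connCount i < G.connCount i) :
    H.rel p < G.rel p := by
  have hpos (i : ℕ) : 0 < p ^ (G.nE - i) * (1 - p) ^ i := by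
    have := sub_pos.2 hp₁
    positivity
  rw [rel_eq_sum_connCount, rel_eq_sum_connCount, hE]
  refine sum_lt_sum
    (fun i _ => mul_le_mul_of_nonneg_right (Nat.cast_le.2 (hle i)) (hpos i).le) ?_
  obtain ⟨i, hi, hi'⟩ := hlt
  exact ⟨i, mem_range.2 (Nat.lt_succ_of_le hi),
    mul_lt_mul_of_pos_right (Nat.cast_lt.2 hi') (hpos i)⟩

/-- The number of linearly independent sets of `i` vectors in the family `ℓ` over the field with two
elements. -/
def indepCount {α : Type*} [Fintype α] (ℓ : α → M) (i : ℕ) : ℕ :=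
  #(univ.filter fun F : Finset α => #F = i ∧ LinearIndepOn (ZMod 2) ℓ F)

theorem IsCographicRep.connCount_eq {ℓ : H.E → M} (h : H.IsCographicRep ℓ) (hH : H.Connected)
    (i : ℕ) : H.connCount i = indepCount ℓ i := by
  simp only [connCount, indepCount, h.connOn_sdiff_iff hH]

/-- The class of colour `b` in the colouring `κ`. -/
def fiber {α β : Type*} [Fintype α] (κ : α → β) (b : β) : Finset α :=
  univ.filter fun a => κ a = b

section indepCount

variable {α β : Type*}

theorem mem_fiber [Fintype α] {κ : α → β} {a : α} {b : β} : a ∈ fiber κ b ↔ κ a = b := by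
  simp only [fiber, mem_filter, mem_univ, true_and]

theorem sum_card_fiber [Fintype α] [Fintype β] (κ : α → β) :
    ∑ b, #(fiber κ b) = Fintype.card α :=
  (card_eq_sum_card_fiberwise fun a _ => mem_univ (κ a)).symm

theorem card_fiber_comp_equiv [Fintype α] {γ : Type*} [Fintype γ] (κ : α → β) (φ : γ ≃ α) (b : β) :
    #(fiber (κ ∘ φ) b) = #(fiber κ b) :=
  card_equiv φ fun a => by simp only [mem_fiber, Function.comp_apply]

theorem linearIndepOn_of_eq_of_ne_zero {ℓ ℓ' : α → M} (hℓ : ∀ a, ℓ a ≠ 0 → ℓ' a = ℓ a) {F : Set α}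
    (hF : LinearIndepOn (ZMod 2) ℓ F) : LinearIndepOn (ZMod 2) ℓ' F :=
  hF.congr fun a ha => (hℓ a (hF.ne_zero ha)).symm

theorem linearIndepOn_comp_iff {P : β → M} {κ : α → β} {F : Finset α} :
    LinearIndepOn (ZMod 2) (P ∘ κ) (F : Set α) ↔
      Set.InjOn κ F ∧ LinearIndepOn (ZMod 2) P (F.image κ : Finset β) := by
  rw [coe_image]
  exact ⟨fun h => ⟨fun a ha b hb hab => h.injOn ha hb (congrArg P hab), h.image_of_comp κ P⟩,
    fun ⟨hinj, h⟩ => h.comp_of_image hinj⟩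

variable [Fintype α] {ℓ ℓ' : α → M}

theorem indepCount_le_of_eq_of_ne_zero (hℓ : ∀ a, ℓ a ≠ 0 → ℓ' a = ℓ a) (i : ℕ) :
    indepCount ℓ i ≤ indepCount ℓ' i :=
  card_le_card <| monotone_filter_right _ fun _ _ =>
    And.imp_right (linearIndepOn_of_eq_of_ne_zero hℓ)

theorem indepCount_eq_zero_of_finrank_lt [Module.Finite (ZMod 2) M] {i : ℕ}
    (hi : Module.finrank (ZMod 2) M < i) : indepCount ℓ i = 0 := by
  rw [indepCount, card_eq_zero, filter_eq_empty_iff]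
  rintro F - ⟨hF, hind⟩
  have := hind.fintype_card_le_finrank
  simp only [coe_sort_coe, Fintype.card_coe] at this
  omega

theorem indepCount_zero (ℓ : α → M) : indepCount ℓ 0 = 1 := by
  rw [indepCount, card_eq_one]
  refine ⟨∅, ?_⟩
  ext F
  simp only [mem_filter, mem_univ, true_and, card_eq_zero, mem_singleton, and_iff_left_iff_imp]
  rintro rfl
  rw [coe_empty]
  exact linearIndepOn_empty _ _

theorem indepCount_one (ℓ : α → M) : indepCount ℓ 1 = #(univ.filter fun a => ℓ a ≠ 0) := by
  refine (congrArg card ?_).trans (card_map (⟨_, singleton_injective⟩ : α ↪ Finset α))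
  ext F
  simp only [mem_filter, mem_univ, true_and, card_eq_one, mem_map]
  constructor
  · rintro ⟨⟨a, rfl⟩, h⟩
    exact ⟨a, h.ne_zero (by simp), rfl⟩
  · rintro ⟨a, ha, rfl⟩
    exact ⟨⟨a, rfl⟩, by simpa using ha⟩

theorem ne_zero_of_card_le_indepCount_one (h : Fintype.card α ≤ indepCount ℓ 1) (a : α) :
    ℓ a ≠ 0 := by
  rw [indepCount_one] at h
  exact card_filter_eq_iff.1 (h.antisymm' (card_filter_le _ _)) a (mem_univ a)

theorem card_filter_injOn_image_eq (κ : α → β) (A : Finset β) :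
    #(univ.filter fun F : Finset α => Set.InjOn κ F ∧ F.image κ = A)
      = ∏ b ∈ A, #(fiber κ b) := by
  let sections := Fintype.piFinset fun b : A => fiber κ b.1
  have hsections {g : A → α} (hg : g ∈ sections) (b : A) : κ (g b) = b :=
    mem_fiber.1 (Fintype.mem_piFinset.1 hg b)
  rw [← prod_coe_sort, ← Fintype.card_piFinset]
  refine (card_bij (fun g _ => univ.image g) (fun g hg => ?_) (fun g hg g' hg' heq => ?_)
    fun F hF => ?_).symm
  · refine mem_filter.2 ⟨mem_univ _, ?_, ?_⟩
    · simp only [coe_image, coe_univ, Set.image_univ, Set.InjOn, Set.forall_mem_range]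
      intro b b' hb
      rw [hsections hg, hsections hg] at hb
      rw [Subtype.ext hb]
    · ext b
      simp [hsections hg]
  · funext b
    obtain ⟨b', -, hb'⟩ := mem_image.1 (heq ▸ mem_image_of_mem g (mem_univ b))
    have hbb' : b' = b := Subtype.ext (by rw [← hsections hg', hb', hsections hg])
    rw [← hb', hbb']
  · obtain ⟨hinj, rfl⟩ := (mem_filter.1 hF).2
    choose g hgF hg using fun b : F.image κ => mem_image.1 b.2
    refine ⟨g, Fintype.mem_piFinset.2 fun b => mem_fiber.2 (hg b), ?_⟩
    ext a
    refine ⟨fun ha => ?_, fun ha => ?_⟩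
    · obtain ⟨b, -, rfl⟩ := mem_image.1 ha
      exact hgF b
    · exact mem_image.2 ⟨⟨κ a, mem_image_of_mem κ ha⟩, mem_univ _, hinj (hgF _) ha (hg _)⟩

theorem indepCount_comp [Fintype β] (P : β → M) (κ : α → β) (i : ℕ) :
    indepCount (P ∘ κ) i =
      ∑ A ∈ (powersetCard i univ).filter fun A : Finset β => LinearIndepOn (ZMod 2) P A,
        ∏ b ∈ A, #(fiber κ b) := by
  rw [indepCount, card_eq_sum_card_fiberwise (f := fun F => F.image κ)
    (t := (powersetCard i univ).filter fun A : Finset β => LinearIndepOn (ZMod 2) P A)]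
  · refine sum_congr rfl fun A hA => ?_
    obtain ⟨hA, hind⟩ := mem_filter.1 hA
    rw [← card_filter_injOn_image_eq, filter_filter]
    congr 1
    ext F
    simp only [mem_filter, mem_univ, true_and, linearIndepOn_comp_iff]
    refine ⟨fun h => ⟨h.1.2.1, h.2⟩, ?_⟩
    rintro ⟨hinj, rfl⟩
    exact ⟨⟨(card_image_of_injOn hinj).symm.trans (mem_powersetCard.1 hA).2, hinj, hind⟩, rfl⟩
  · intro F hF
    obtain ⟨hcard, hind⟩ := (mem_filter.1 hF).2
    obtain ⟨hinj, hind⟩ := linearIndepOn_comp_iff.1 hind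
    exact mem_filter.2
      ⟨mem_powersetCard.2 ⟨subset_univ _, (card_image_of_injOn hinj).trans hcard⟩, hind⟩

end indepCount

end Multigraph

namespace Multigraph

variable {M : Type*} [AddCommGroup M] [Module (ZMod 2) M]

theorem linearIndepOn_iff_sum_ne_zero {β : Type*} {P : β → M} {A : Finset β} :
    LinearIndepOn (ZMod 2) P A ↔ ∀ B ⊆ A, B.Nonempty → ∑ b ∈ B, P b ≠ 0 := by
  rw [linearIndepOn_finset_iff]
  constructor
  · intro h B hBA ⟨b, hb⟩ hsum
    have := h (fun b => if b ∈ B then 1 else 0) (by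
      simpa only [ite_smul, one_smul, zero_smul, sum_ite_mem, inter_eq_right.2 hBA] using hsum) b
      (hBA hb)
    simp only [hb, if_true, one_ne_zero] at this
  · intro h y hy b hb
    by_contra hyb
    refine h (A.filter fun b => y b ≠ 0) (filter_subset _ _) ⟨b, mem_filter.2 ⟨hb, hyb⟩⟩ ?_
    rw [← hy, sum_filter]
    have hone : ∀ t : ZMod 2, t ≠ 0 → t = 1 := by decide
    refine sum_congr rfl fun b _ => ?_
    split_ifs with hb
    · rw [hone _ hb, one_smul]
    · rw [not_not.1 hb, zero_smul]

theorem linearIndepOn_iff_of_card_le_three {β : Type*} {P : β → M} (hinj : Function.Injective P)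
    (hne : ∀ b, P b ≠ 0) {A : Finset β} (hA : #A ≤ 3) :
    LinearIndepOn (ZMod 2) P A ↔ A.Nonempty → ∑ b ∈ A, P b ≠ 0 := by
  rw [linearIndepOn_iff_sum_ne_zero]
  refine ⟨fun h => h A Subset.rfl, fun h B hBA hB hsum => ?_⟩
  have hcard := three_le_card_of_sum_eq_zero hB hinj.injOn (fun b _ => hne b) hsum
  rw [eq_of_subset_of_card_le hBA (by omega)] at hB hsum
  exact h hB hsum

end Multigraph

namespace K4

theorem label_ne_zero (e : K4.E) : label e ≠ 0 := by
  revert e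
  decide

/-- The number of ways to delete three edges from the weak subdivision of `K₄` with chain lengths
`w` so that a spanning tree remains: the edges have to come from three chains corresponding to the
complement of a spanning tree of `K₄`. -/
def cotreeCount (w : K4.E → ℕ) : ℕ :=
  w e01 * w e23 * (w e02 + w e13 + w e03 + w e12) + w e02 * w e13 * (w e01 + w e23 + w e03 + w e12)
    + w e03 * w e12 * (w e01 + w e23 + w e02 + w e13)
    + (w e01 * w e02 * w e12 + w e01 * w e03 * w e13 + w e02 * w e03 * w e23
      + w e12 * w e13 * w e23)

theorem sum_powersetCard_edges (i : ℕ) (g : Multiset K4.E → ℕ) :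
    ∑ A ∈ powersetCard i (univ : Finset K4.E), g A.val =
      ((Multiset.powersetCard i ↑[e01, e02, e03, e12, e13, e23]).map g).sum := by
  rw [← univ_val_eq, ← map_val_val_powersetCard, Multiset.map_map]
  rfl

theorem two_mul_sum_powersetCard_two (w : K4.E → ℕ) :
    2 * ∑ A ∈ powersetCard 2 univ, ∏ e ∈ A, w e + ∑ e, w e ^ 2 = (∑ e, w e) ^ 2 := by
  have h := sum_powersetCard_edges 2 fun A => (A.map w).prod
  simp only [Multiset.powersetCard_coe, List.sublistsLen_succ_cons, List.sublistsLen_zero,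
    List.sublistsLen_succ_nil] at h
  have h' : ∑ A ∈ powersetCard 2 univ, ∏ e ∈ A, w e = _ := h
  rw [h', sum_edges, sum_edges]
  simp only [List.map_cons, List.map_nil, List.nil_append, List.cons_append, Multiset.map_coe,
    Multiset.sum_coe, Multiset.prod_coe, List.sum_cons, List.sum_nil, List.prod_cons, List.prod_nil]
  ring

theorem sum_powersetCard_three (w : K4.E → ℕ) :
    ∑ A ∈ powersetCard 3 univ, (if ∑ e ∈ A, label e = 0 then 0 else ∏ e ∈ A, w e) =
      cotreeCount w := by
  have h := sum_powersetCard_edges 3 fun A => if (A.map label).sum = 0 then 0 else (A.map w).prod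
  simp only [Multiset.powersetCard_coe, List.sublistsLen_succ_cons, List.sublistsLen_zero,
    List.sublistsLen_succ_nil] at h
  refine h.trans ?_
  simp +decide only [List.map_cons, List.map_nil, List.nil_append, List.cons_append,
    Multiset.map_coe, Multiset.sum_coe, Multiset.prod_coe, List.sum_cons, List.sum_nil,
    List.prod_cons, List.prod_nil, if_true, if_false, cotreeCount]
  ring

variable {α : Type*} [Fintype α] (κ : α → K4.E)

theorem indepCount_one : Multigraph.indepCount (label ∘ κ) 1 = Fintype.card α := by
  simp only [Multigraph.indepCount_one, Function.comp_apply, ne_eq, label_ne_zero,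
    not_false_eq_true, filter_true, card_univ]

theorem indepCount_two :
    2 * Multigraph.indepCount (label ∘ κ) 2 + ∑ e, #(Multigraph.fiber κ e) ^ 2 =
      (∑ e, #(Multigraph.fiber κ e)) ^ 2 := by
  rw [← two_mul_sum_powersetCard_two, Multigraph.indepCount_comp, filter_true_of_mem]
  intro A hA
  have hA := (mem_powersetCard.1 hA).2
  refine (Multigraph.linearIndepOn_iff_of_card_le_three label_injective label_ne_zero
    (by omega)).2 fun hne hsum => ?_
  have := Multigraph.three_le_card_of_sum_eq_zero hne label_injective.injOn
    (fun e _ => label_ne_zero e) hsum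
  omega

theorem indepCount_three :
    Multigraph.indepCount (label ∘ κ) 3 = cotreeCount fun e => #(Multigraph.fiber κ e) := by
  rw [← sum_powersetCard_three, Multigraph.indepCount_comp, sum_filter]
  refine sum_congr rfl fun A hA => ?_
  have hA := (mem_powersetCard.1 hA).2
  have hne : A.Nonempty := card_pos.1 (by omega)
  simp only [Multigraph.linearIndepOn_iff_of_card_le_three label_injective label_ne_zero hA.le, hne,
    forall_const, ne_eq, ite_not]

end K4

namespace K4

/-! ### Maximizing the number of spanning trees -/

/-- The sum of the squared differences of the lengths of opposite chains. -/
def imbalance (w : K4.E → ℕ) : ℤ :=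
  ((w e01 : ℤ) - w e23) ^ 2 + ((w e02 : ℤ) - w e13) ^ 2 + ((w e03 : ℤ) - w e12) ^ 2

theorem imbalance_const_add (q : ℕ) (x : K4.E → ℕ) :
    imbalance (fun e => q + x e) = imbalance x := by
  simp only [imbalance, Nat.cast_add, add_sub_add_left_eq_sub]

theorem sum_emod_two_le_imbalance (w : K4.E → ℕ) : (((∑ e, w e) % 2 : ℕ) : ℤ) ≤ imbalance w := by
  have hsq (a b : ℕ) : ∃ k, ((a : ℤ) - b) ^ 2 = a + b + 2 * k := by
    obtain ⟨i, hi⟩ := (Int.even_mul_pred_self a).two_dvd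
    obtain ⟨j, hj⟩ := (Int.even_mul_pred_self b).two_dvd
    exact ⟨i + j - a * b, by linear_combination hi + hj⟩
  have hnonneg : 0 ≤ imbalance w := by
    unfold imbalance
    positivity
  obtain ⟨i, hi⟩ := hsq (w e01) (w e23)
  obtain ⟨j, hj⟩ := hsq (w e02) (w e13)
  obtain ⟨k, hk⟩ := hsq (w e03) (w e12)
  rw [imbalance, hi, hj, hk] at hnonneg ⊢
  rw [sum_edges]
  omega

theorem two_mul_cotreeCount_const_add (q : ℕ) (x : K4.E → ℕ) :
    2 * (cotreeCount (fun e => q + x e) : ℤ) = 32 * q ^ 3 + 16 * q ^ 2 * ∑ e, (x e : ℤ)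
      + q * (3 * (∑ e, (x e : ℤ)) ^ 2 - 2 * ∑ e, (x e : ℤ) ^ 2 - imbalance x)
      + 2 * cotreeCount x := by
  simp only [cotreeCount, imbalance, sum_edges]
  push_cast
  ring

/-- The position of an edge in an ordering of the edges of `K₄`, chosen such that the first two
edges are non-adjacent, the first three form a path and the last two are non-adjacent. -/
def edgeRank (e : K4.E) : ℕ :=
  (![![0, 0, 2, 4], ![0, 0, 5, 3], ![0, 0, 0, 1], 0] : Fin 4 → Fin 4 → ℕ) e.1.1 e.1.2

/-- The lengths of the chains of the optimal graph with `m` edges: the first `m % 6` edges of `K₄`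
receive the longer chains. -/
def optimalLengths (m : ℕ) (e : K4.E) : ℕ := m / 6 + if edgeRank e < m % 6 then 1 else 0

theorem optimalLengths_mul_add (k m : ℕ) :
    optimalLengths (6 * k + m) = fun e => k + optimalLengths m e := by
  funext e
  rw [optimalLengths, optimalLengths, Nat.mul_add_mod, Nat.mul_add_div (by norm_num), add_assoc]

theorem optimalLengths_eq_add_mod (m : ℕ) :
    optimalLengths m = fun e => m / 6 + optimalLengths (m % 6) e := by
  rw [← optimalLengths_mul_add, Nat.div_add_mod]

theorem sum_const_add (q : ℕ) (x : K4.E → ℕ) : ∑ e, (q + x e) = 6 * q + ∑ e, x e := by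
  rw [sum_add_distrib, sum_const, smul_eq_mul]
  rfl

theorem sum_optimalLengths (m : ℕ) : ∑ e, optimalLengths m e = m := by
  have h : ∀ r < 6, ∑ e, optimalLengths r e = r := by decide
  rw [optimalLengths_eq_add_mod, sum_const_add, h _ (Nat.mod_lt _ (by norm_num)), Nat.div_add_mod]

theorem imbalance_optimalLengths (m : ℕ) : imbalance (optimalLengths m) = (m % 2 : ℕ) := by
  have h : ∀ r < 6, imbalance (optimalLengths r) = (r % 2 : ℕ) := by decide
  rw [optimalLengths_eq_add_mod, imbalance_const_add, h _ (Nat.mod_lt _ (by norm_num)),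
    Nat.mod_mod_of_dvd _ (by norm_num)]

theorem sum_sq_sub_sum_sq {m : ℕ} {w : K4.E → ℕ} (hw : ∑ e, w e = m) :
    ∑ e, (w e : ℤ) ^ 2 - ∑ e, (optimalLengths m e : ℤ) ^ 2 =
      ∑ e, ((w e : ℤ) - (m / 6 : ℕ)) * (w e - (m / 6 : ℕ) - 1) := by
  have hsum : ∑ e, ((w e : ℤ) - optimalLengths m e) = 0 := by
    rw [sum_sub_distrib, ← Nat.cast_sum, ← Nat.cast_sum, hw, sum_optimalLengths, sub_self]
  have hopt (e : K4.E) : ((optimalLengths m e : ℤ) - (m / 6 : ℕ)) *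
      (optimalLengths m e - (m / 6 : ℕ) - 1) = 0 := by
    unfold optimalLengths
    split_ifs <;> push_cast <;> ring
  calc
    _ = ∑ e, ((w e : ℤ) ^ 2 - (optimalLengths m e : ℤ) ^ 2) := (sum_sub_distrib _ _).symm
    _ = ∑ e, (((w e : ℤ) - (m / 6 : ℕ)) * (w e - (m / 6 : ℕ) - 1) +
          (2 * ((m / 6 : ℕ) : ℤ) + 1) * (w e - optimalLengths m e)) :=
        sum_congr rfl fun e _ => by linear_combination -hopt e
    _ = _ := by rw [sum_add_distrib, ← mul_sum, hsum, mul_zero, add_zero]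

theorem mul_sub_one_nonneg (t : ℤ) : 0 ≤ t * (t - 1) := by
  obtain h | h := le_or_gt t 0
  · exact mul_nonneg_of_nonpos_of_nonpos h (by omega)
  · exact mul_nonneg h.le (by omega)

theorem sum_sq_optimalLengths_le {m : ℕ} {w : K4.E → ℕ} (hw : ∑ e, w e = m) :
    ∑ e, optimalLengths m e ^ 2 ≤ ∑ e, w e ^ 2 := by
  have h := sum_nonneg fun e (_ : e ∈ univ) => mul_sub_one_nonneg (w e - (m / 6 : ℕ))
  rw [← sum_sq_sub_sum_sq hw, sub_nonneg] at h
  exact_mod_cast h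

theorem eq_or_eq_of_sum_sq_le {m : ℕ} {w : K4.E → ℕ} (hw : ∑ e, w e = m)
    (hle : ∑ e, w e ^ 2 ≤ ∑ e, optimalLengths m e ^ 2) (e : K4.E) :
    w e = m / 6 ∨ w e = m / 6 + 1 := by
  have h : ∑ e, ((w e : ℤ) - (m / 6 : ℕ)) * (w e - (m / 6 : ℕ) - 1) = 0 := by
    rw [← sum_sq_sub_sum_sq hw, sub_eq_zero]
    exact_mod_cast hle.antisymm (sum_sq_optimalLengths_le hw)
  have he := (sum_eq_zero_iff_of_nonneg fun e _ => mul_sub_one_nonneg _).1 h e (mem_univ e)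
  obtain he | he := mul_eq_zero.1 he <;> omega

theorem five_chains_bound {a b b' c c' : ℕ} :
    243 * (b * b' * (a + c + c') + c * c' * (a + b + b') + a * (b * c + b' * c')) ≤
      16 * (a + b + b' + c + c') ^ 3 := by
  zify
  obtain ⟨t, ht⟩ : ∃ t : ℤ, t = b + b' + c + c' := ⟨_, rfl⟩
  have h1 : 4 * (b * b' + c * c' + (b * c + b' * c') : ℤ) ≤ t ^ 2 := by
    rw [ht]
    linarith [sq_nonneg (b + c' - (b' + c) : ℤ)]
  have h2 : 16 * (b * b' * (c + c') + c * c' * (b + b') : ℤ) ≤ t ^ 3 := by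
    have hb := mul_nonneg (sq_nonneg (b - b' : ℤ)) (add_nonneg c.cast_nonneg c'.cast_nonneg)
    have hc := mul_nonneg (sq_nonneg (c - c' : ℤ)) (add_nonneg b.cast_nonneg b'.cast_nonneg)
    have hbc := mul_nonneg (sq_nonneg (b + b' - (c + c') : ℤ)) (ht ▸ (by positivity) : 0 ≤ t)
    rw [ht] at hbc ⊢
    linarith
  have h3 : 0 ≤ (9 * t - 8 * (a + t)) ^ 2 * (9 * t + 4 * (a + t)) := by rw [ht]; positivity
  have h4 := mul_le_mul_of_nonneg_left h1 (a.cast_nonneg : (0 : ℤ) ≤ a)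
  rw [show (a + b + b' + c + c' : ℤ) = a + t by rw [ht]; ring]
  linarith

theorem cotreeCount_le_of_eq_zero (w : K4.E → ℕ) : ∀ e, w e = 0 →
    243 * cotreeCount w ≤ 16 * (∑ e, w e) ^ 3 := by
  have key (b b' c c' a : ℕ) {P S : ℕ} (hS : S = a + b + b' + c + c')
      (hP : P = b * b' * (a + c + c') + c * c' * (a + b + b') + a * (b * c + b' * c')) :
      243 * P ≤ 16 * S ^ 3 := by
    rw [hS, hP]
    exact five_chains_bound
  simp only [cotreeCount, sum_edges]
  refine forall_edges.2 ⟨fun h => key (w e02) (w e13) (w e03) (w e12) (w e23) ?_ ?_,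
    fun h => key (w e01) (w e23) (w e03) (w e12) (w e13) ?_ ?_,
    fun h => key (w e01) (w e23) (w e02) (w e13) (w e12) ?_ ?_,
    fun h => key (w e01) (w e23) (w e13) (w e02) (w e03) ?_ ?_,
    fun h => key (w e01) (w e23) (w e12) (w e03) (w e02) ?_ ?_,
    fun h => key (w e02) (w e13) (w e12) (w e03) (w e01) ?_ ?_⟩ <;> rw [h] <;> ring

theorem two_mul_cotreeCount_optimalLengths (q : ℕ) {r : ℕ} (hr : r < 6) :
    2 * (cotreeCount (optimalLengths (6 * q + r)) : ℤ) = 32 * q ^ 3 + 16 * q ^ 2 * r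
      + q * (3 * r ^ 2 - 2 * r - (r % 2 : ℕ)) + 2 * cotreeCount (optimalLengths r) := by
  have hsq : ∀ r < 6, ∑ e, optimalLengths r e ^ 2 = r := by decide
  rw [optimalLengths_mul_add, two_mul_cotreeCount_const_add, imbalance_optimalLengths,
    ← Nat.cast_sum, sum_optimalLengths]
  have := hsq r hr
  zify at this
  rw [this]

theorem cotreeCount_optimalLengths_fin :
    ∀ r : Fin 6, cotreeCount (optimalLengths r) = ![0, 0, 0, 1, 4, 8] r := by
  decide

theorem lt_cotreeCount_optimalLengths (m : ℕ) :
    16 * m ^ 3 < 243 * (cotreeCount (optimalLengths m) + 1) := by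
  obtain ⟨q, r, hr, rfl⟩ : ∃ q r, r < 6 ∧ m = 6 * q + r :=
    ⟨m / 6, m % 6, Nat.mod_lt _ (by norm_num), (Nat.div_add_mod m 6).symm⟩
  have h := two_mul_cotreeCount_optimalLengths q hr
  have hq2 : (q : ℤ) ≤ q ^ 2 := by exact_mod_cast Nat.le_self_pow two_ne_zero q
  have hq3 : (q : ℤ) * q ≤ q * q ^ 2 := mul_le_mul_of_nonneg_left hq2 q.cast_nonneg
  rw [cotreeCount_optimalLengths_fin ⟨r, hr⟩] at h
  zify
  interval_cases r <;> norm_num at h ⊢ <;> nlinarith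

theorem cotreeCount_le_of_exists_eq_zero {w : K4.E → ℕ} (h : ∃ e, w e = 0) :
    cotreeCount w ≤ cotreeCount (optimalLengths (∑ e, w e)) := by
  obtain ⟨e, he⟩ := h
  have := lt_cotreeCount_optimalLengths (∑ e, w e)
  have := cotreeCount_le_of_eq_zero w e he
  omega

theorem cotreeCount_le (w : K4.E → ℕ) :
    cotreeCount w ≤ cotreeCount (optimalLengths (∑ e, w e)) := by
  obtain ⟨e, he⟩ := exists_min_image univ w ⟨e01, mem_univ _⟩
  obtain ⟨x, hx⟩ : ∃ x : K4.E → ℕ, w = fun f => w e + x f :=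
    ⟨fun f => w f - w e, funext fun f => (Nat.add_sub_cancel' (he.2 f (mem_univ f))).symm⟩
  have hxe : x e = 0 := by
    have := congrFun hx e
    omega
  generalize w e = k at hx
  subst hx
  have hsum := sum_optimalLengths (∑ e, x e)
  have hsq := sum_sq_optimalLengths_le (w := x) rfl
  have himb := sum_emod_two_le_imbalance x
  have hx := cotreeCount_le_of_exists_eq_zero ⟨e, hxe⟩
  have key := two_mul_cotreeCount_const_add k x
  have key' := two_mul_cotreeCount_const_add k (optimalLengths (∑ e, x e))
  rw [sum_const_add, optimalLengths_mul_add]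
  rw [imbalance_optimalLengths, ← Nat.cast_sum, hsum, Nat.cast_sum] at key'
  zify at hsq hx ⊢
  have := mul_le_mul_of_nonneg_left (add_le_add (mul_le_mul_of_nonneg_left hsq zero_le_two) himb)
    (k.cast_nonneg : (0 : ℤ) ≤ k)
  linarith

theorem exists_eq_const_add {α : Type*} {q : ℕ} {w : α → ℕ} (hw : ∀ a, w a = q ∨ w a = q + 1) :
    ∃ y : α → Fin 2, w = fun a => q + y a := by
  refine ⟨fun a => ⟨w a - q, ?_⟩, funext fun a => ?_⟩ <;> obtain h | h := hw a <;>
    simp only [h] <;> omega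

theorem imbalance_eq_of_le_cotreeCount_fin {y : K4.E → Fin 2} (h4 : 4 ≤ ∑ e, (y e : ℕ))
    (h6 : ∑ e, (y e : ℕ) < 6)
    (hle : cotreeCount (optimalLengths (∑ e, (y e : ℕ))) ≤ cotreeCount fun e => y e) :
    imbalance (fun e => y e) = ((∑ e, (y e : ℕ)) % 2 : ℕ) := by
  have hfin : ∀ a b c c' b' a' : Fin 2, ∀ s : Fin 6, 4 ≤ (s : ℕ) →
      (a + b + c + c' + b' + a' : ℕ) = s → ![0, 0, 0, 1, 4, 8] s ≤
        (a * a' * (b + b' + c + c') + b * b' * (a + a' + c + c') + c * c' * (a + a' + b + b') +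
          (a * b * c' + a * c * b' + b * c * a' + c' * b' * a') : ℕ) →
      (((a : ℕ) - (a' : ℕ) : ℤ) ^ 2 + ((b : ℕ) - (b' : ℕ) : ℤ) ^ 2
        + ((c : ℕ) - (c' : ℕ) : ℤ) ^ 2) = ((s : ℕ) % 2 : ℕ) := by
    decide +kernel
  have h := cotreeCount_optimalLengths_fin ⟨_, h6⟩
  exact hfin (y e01) (y e02) (y e03) (y e12) (y e13) (y e23) ⟨_, h6⟩ h4
    (sum_edges fun e => (y e : ℕ)).symm (h ▸ hle)

theorem imbalance_eq_of_le_cotreeCount {m : ℕ} (hm : 4 ≤ m) {w : K4.E → ℕ} (hw : ∑ e, w e = m)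
    (hbal : ∀ e, w e = m / 6 ∨ w e = m / 6 + 1)
    (hle : cotreeCount (optimalLengths m) ≤ cotreeCount w) : imbalance w = (m % 2 : ℕ) := by
  obtain ⟨y, rfl⟩ := exists_eq_const_add hbal
  rw [sum_const_add] at hw
  have hr : ∑ e, (y e : ℕ) = m % 6 := by omega
  have hlt := Nat.mod_lt m (show 0 < 6 by norm_num)
  rw [imbalance_const_add, ← Nat.mod_mod_of_dvd m (show 2 ∣ 6 by norm_num), ← hr]
  obtain hq | hq := (m / 6).eq_zero_or_pos
  · simp only [hq, zero_add] at hle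
    exact imbalance_eq_of_le_cotreeCount_fin (by omega) (by omega)
      (by rwa [hr, Nat.mod_eq_of_lt (by omega)])
  refine le_antisymm ?_ (sum_emod_two_le_imbalance _)
  have hmax := cotreeCount_le fun e => y e
  have hsq : ∑ e, ((y e : ℕ) : ℤ) ^ 2 = ∑ e, ((y e : ℕ) : ℤ) := by
    have h : ∀ a : Fin 2, ((a : ℕ) : ℤ) ^ 2 = (a : ℕ) := by decide
    simp only [h]
  have key := two_mul_cotreeCount_const_add (m / 6) fun e => y e
  have key' := two_mul_cotreeCount_optimalLengths (m / 6) hlt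
  rw [Nat.div_add_mod, ← hr] at key'
  rw [hsq, ← Nat.cast_sum] at key
  zify at hmax hle
  refine le_of_mul_le_mul_left ?_ (Nat.cast_pos.2 hq : (0 : ℤ) < (m / 6 : ℕ))
  linarith

end K4

theorem degIn_filter (D : Multigraph) (p : D.E → Prop) [DecidablePred p] (v : D.V) :
    degIn D (univ.filter p) v =
      ∑ e, if p e then (if D.src e = v then 1 else 0) + (if D.tgt e = v then 1 else 0) else 0 := by
  rw [degIn, filter_filter, filter_filter, card_filter, card_filter, ← sum_add_distrib]
  refine sum_congr rfl fun e _ => ?_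
  by_cases h : p e <;> simp [h]

namespace K4

/-! ### Balanced chain lengths -/

theorem eq_or_eq_of_balancedWeights {m : ℕ} {w : K4.E → ℕ} (hbal : BalancedWeights w)
    (hw : ∑ e, w e = m) (e : K4.E) : w e = m / 6 ∨ w e = m / 6 + 1 := by
  obtain ⟨f, -, hf⟩ := exists_min_image univ w ⟨e01, mem_univ _⟩
  have hle : ∑ _e : K4.E, w f ≤ ∑ e, w e := sum_le_sum hf
  have hlt : ∑ e, w e < ∑ e : K4.E, (w f + 1) :=
    sum_lt_sum (fun e _ => hbal e f) ⟨f, mem_univ _, lt_add_one _⟩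
  have hcard : #(univ : Finset K4.E) = 6 := rfl
  rw [sum_const, hcard, smul_eq_mul, hw] at hle hlt
  have := hf e (mem_univ e)
  have := hbal e f
  omega

theorem maxChains_const_add (q : ℕ) {y : K4.E → Fin 2} (hy : ∑ e, (y e : ℕ) ≠ 0) :
    maxChains K4 (fun e => q + y e) = univ.filter fun e => y e = 1 := by
  obtain ⟨f, -, hf⟩ := exists_ne_zero_of_sum_ne_zero hy
  ext e
  simp only [maxChains, mem_filter, mem_univ, true_and, add_le_add_iff_left]
  refine ⟨fun h => ?_, fun h f => ?_⟩
  · have := h f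
    omega
  · omega

theorem minChains_const_add (q : ℕ) {y : K4.E → Fin 2} (hy : ∑ e, (y e : ℕ) < 6) :
    minChains K4 (fun e => q + y e) = univ.filter fun e => (y e).rev = 1 := by
  obtain ⟨f, hf⟩ : ∃ f, y f = 0 := by
    by_contra! h
    have h1 (e : K4.E) : (y e : ℕ) = 1 := by
      have := h e
      omega
    simp only [h1] at hy
    exact hy.ne rfl
  have hrev : ∀ a : Fin 2, a.rev = 1 ↔ a = 0 := by decide
  ext e
  simp only [minChains, mem_filter, mem_univ, true_and, add_le_add_iff_left, hrev]
  refine ⟨fun h => ?_, fun h f => ?_⟩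
  · have := h f
    omega
  · omega

/-- The degrees of the vertices of `K₄` in the set of edges with the given indicator function, which
is listed in the order `01`, `02`, `03`, `12`, `13`, `23`. -/
def degrees (a b c c' b' a' : ℕ) : Fin 4 → ℕ :=
  ![a + b + c, a + c' + b', b + c' + a', c + b' + a']

theorem degIn_filter_eq_one (y : K4.E → Fin 2) :
    degIn K4 (univ.filter fun e => y e = 1) =
      degrees (y e01) (y e02) (y e03) (y e12) (y e13) (y e23) := by
  have hone : ∀ a : Fin 2, (if a = 1 then 1 else 0) = (a : ℕ) := by decide
  refine funext (Fin.forall_fin_succ.2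
      ⟨?_, Fin.forall_fin_succ.2 ⟨?_, Fin.forall_fin_two.2 ⟨?_, ?_⟩⟩⟩) <;>
    refine (degIn_filter _ _ _).trans ((sum_edges _).trans ?_) <;>
    simp [K4, e01, e02, e03, e12, e13, e23, degrees, hone]

theorem isMatchingIn_iff {y : K4.E → Fin 2} (hy : ∑ e, (y e : ℕ) = 2) :
    IsMatchingIn K4 (univ.filter fun e => y e = 1) ↔ imbalance (fun e => y e) = 0 := by
  have hfin : ∀ a b c c' b' a' : Fin 2, (a + b + c + c' + b' + a' : ℕ) = 2 →
      ((∀ v, degrees a b c c' b' a' v ≤ 1) ↔ (((a : ℕ) - (a' : ℕ) : ℤ) ^ 2 +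
        ((b : ℕ) - (b' : ℕ) : ℤ) ^ 2 + ((c : ℕ) - (c' : ℕ) : ℤ) ^ 2) = 0) := by
    decide +kernel
  rw [sum_edges] at hy
  rw [IsMatchingIn, degIn_filter_eq_one]
  exact hfin _ _ _ _ _ _ hy

theorem isPath3In_iff {y : K4.E → Fin 2} (hy : ∑ e, (y e : ℕ) = 3) :
    IsPath3In K4 (univ.filter fun e => y e = 1) ↔ imbalance (fun e => y e) = 1 := by
  have hfin : ∀ a b c c' b' a' : Fin 2, (a + b + c + c' + b' + a' : ℕ) = 3 →
      ((∀ v, degrees a b c c' b' a' v ≤ 2) ∧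
        ∑ v, (if degrees a b c c' b' a' v = 1 then 1 else 0) = 2 ↔
          (((a : ℕ) - (a' : ℕ) : ℤ) ^ 2 + ((b : ℕ) - (b' : ℕ) : ℤ) ^ 2 +
            ((c : ℕ) - (c' : ℕ) : ℤ) ^ 2) = 1) := by
    decide +kernel
  have hcard : #(univ.filter fun e => y e = 1) = 3 := by
    rw [← hy, card_filter]
    exact sum_congr rfl fun e _ => by generalize y e = a; revert a; decide
  rw [sum_edges] at hy
  rw [IsPath3In, and_iff_right hcard, degIn_filter_eq_one, card_filter]
  exact (and_congr_right' (Eq.congr_left (sum_congr rfl fun v _ => if_congr Iff.rfl rfl rfl))).trans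
    (hfin _ _ _ _ _ _ hy)

theorem imbalance_eq_of_sum {y : K4.E → Fin 2}
    (hy : ∑ e, (y e : ℕ) = 0 ∨ ∑ e, (y e : ℕ) = 1 ∨ ∑ e, (y e : ℕ) = 5) :
    imbalance (fun e => y e) = ((∑ e, (y e : ℕ)) % 2 : ℕ) := by
  have hfin : ∀ a b c c' b' a' : Fin 2, (a + b + c + c' + b' + a' : ℕ) = 0 ∨
      (a + b + c + c' + b' + a' : ℕ) = 1 ∨ (a + b + c + c' + b' + a' : ℕ) = 5 →
        (((a : ℕ) - (a' : ℕ) : ℤ) ^ 2 + ((b : ℕ) - (b' : ℕ) : ℤ) ^ 2 +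
            ((c : ℕ) - (c' : ℕ) : ℤ) ^ 2) = ((a + b + c + c' + b' + a' : ℕ) % 2 : ℕ) := by
    decide +kernel
  rw [sum_edges] at hy ⊢
  exact hfin _ _ _ _ _ _ hy

theorem sum_rev (y : K4.E → Fin 2) : ∑ e, ((y e).rev : ℕ) + ∑ e, (y e : ℕ) = 6 := by
  have h : ∀ a : Fin 2, (a.rev : ℕ) + a = 1 := by decide
  simp only [← sum_add_distrib, h]
  rfl

theorem imbalance_rev (y : K4.E → Fin 2) :
    imbalance (fun e => (y e).rev) = imbalance fun e => y e := by
  have h : ∀ a b : Fin 2, ((a.rev : ℕ) - (b.rev : ℕ) : ℤ) ^ 2 = ((a : ℕ) - (b : ℕ)) ^ 2 := by decide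
  simp only [imbalance, h]

theorem k4Cond_iff {m : ℕ} {w : K4.E → ℕ} (hw : ∑ e, w e = m)
    (hbal : ∀ e, w e = m / 6 ∨ w e = m / 6 + 1) : k4Cond m w ↔ imbalance w = (m % 2 : ℕ) := by
  obtain ⟨y, rfl⟩ := exists_eq_const_add hbal
  rw [sum_const_add] at hw
  have hr : ∑ e, (y e : ℕ) = m % 6 := by omega
  have hlt := Nat.mod_lt m (show 0 < 6 by norm_num)
  rw [imbalance_const_add, ← Nat.mod_mod_of_dvd m (show 2 ∣ 6 by norm_num), k4Cond]
  generalize m % 6 = r at hr hlt ⊢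
  by_cases h : r = 0 ∨ r = 1 ∨ r = 5
  · refine iff_of_true ⟨by omega, by omega, by omega⟩ ?_
    rw [← hr] at h ⊢
    exact imbalance_eq_of_sum h
  obtain rfl | rfl | rfl : r = 2 ∨ r = 4 ∨ r = 3 := by omega
  · rw [maxChains_const_add _ (by omega), isMatchingIn_iff hr]
    norm_num
  · rw [minChains_const_add _ (by omega), isMatchingIn_iff (by have := sum_rev y; omega),
      imbalance_rev]
    norm_num
  · rw [maxChains_const_add _ (by omega), isPath3In_iff hr]
    norm_num

theorem optimalLengths_eq_or_eq (m : ℕ) (e : K4.E) :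
    optimalLengths m e = m / 6 ∨ optimalLengths m e = m / 6 + 1 := by
  rw [optimalLengths]
  split_ifs <;> simp

theorem balancedWeights_optimalLengths (m : ℕ) : BalancedWeights (optimalLengths m) := by
  intro e f
  have he := optimalLengths_eq_or_eq m e
  have hf := optimalLengths_eq_or_eq m f
  omega

/-! ### The action of the symmetric group on the edges of `K₄` -/

/-- The edge of `K₄` with the ends `u` and `v`. -/
def edge (u v : Fin 4) (h : u ≠ v) : K4.E := ⟨(min u v, max u v), min_lt_max.2 h⟩

theorem edge_of_lt {u v : Fin 4} (h : u < v) : edge u v h.ne = ⟨(u, v), h⟩ :=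
  Subtype.ext (Prod.ext (min_eq_left h.le) (max_eq_right h.le))

theorem edge_comm {u v : Fin 4} (h : u ≠ v) : edge u v h = edge v u h.symm :=
  Subtype.ext (Prod.ext (min_comm u v) (max_comm u v))

/-- The image of an edge of `K₄` under a permutation of the vertices. -/
def permEdge (σ : Equiv.Perm (Fin 4)) (e : K4.E) : K4.E :=
  edge (σ e.1.1) (σ e.1.2) (σ.injective.ne e.2.ne)

theorem permEdge_edge (σ : Equiv.Perm (Fin 4)) {u v : Fin 4} (h : u ≠ v) :
    permEdge σ (edge u v h) = edge (σ u) (σ v) (σ.injective.ne h) := by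
  rcases lt_or_gt_of_ne h with hlt | hlt
  · simp only [edge_of_lt hlt, permEdge]
  · simp only [edge_comm h, edge_of_lt hlt, permEdge]
    exact edge_comm _

theorem permEdge_permEdge_of_leftInverse {σ τ : Equiv.Perm (Fin 4)}
    (h : Function.LeftInverse τ σ) : Function.LeftInverse (permEdge τ) (permEdge σ) := by
  intro e
  refine (permEdge_edge τ _).trans ?_
  simp only [h _]
  exact edge_of_lt e.2

/-- The automorphism of `K₄` induced by a permutation of the vertices. -/
def isoOfPerm (σ : Equiv.Perm (Fin 4)) : MGIso K4 K4 where
  vMap := σ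
  eMap := ⟨permEdge σ, permEdge σ.symm, permEdge_permEdge_of_leftInverse σ.left_inv,
    permEdge_permEdge_of_leftInverse σ.right_inv⟩
  ends_eq e := by
    rcases le_total (σ e.1.1) (σ e.1.2) with h | h
    · exact Or.inl ⟨min_eq_left h, max_eq_right h⟩
    · exact Or.inr ⟨min_eq_right h, max_eq_left h⟩

theorem exists_perm_eq_edgeRank_lt (y : K4.E → Fin 2) (hy : ∑ e, (y e : ℕ) < 6)
    (himb : imbalance (fun e => y e) = ((∑ e, (y e : ℕ)) % 2 : ℕ)) :
    ∃ σ : Equiv.Perm (Fin 4), ∀ e,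
      (y (permEdge σ e) : ℕ) = if edgeRank e < ∑ e, (y e : ℕ) then 1 else 0 := by
  let Y (a b c c' b' a' : Fin 2) : Fin 4 → Fin 4 → Fin 2 :=
    ![![0, a, b, c], ![a, 0, c', b'], ![b, c', 0, a'], ![c, b', a', 0]]
  have hfin : ∀ a b c c' b' a' : Fin 2, (a + b + c + c' + b' + a' : ℕ) < 6 →
      (((a : ℕ) - (a' : ℕ) : ℤ) ^ 2 + ((b : ℕ) - (b' : ℕ) : ℤ) ^ 2 +
        ((c : ℕ) - (c' : ℕ) : ℤ) ^ 2) = ((a + b + c + c' + b' + a' : ℕ) % 2 : ℕ) →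
      ∃ σ : Equiv.Perm (Fin 4), ∀ e : K4.E, (Y a b c c' b' a' (σ e.1.1) (σ e.1.2) : ℕ) =
        if edgeRank e < (a + b + c + c' + b' + a' : ℕ) then 1 else 0 := by
    decide +kernel
  have hedge (u v : Fin 4) (h : u ≠ v) :
      y (edge u v h) = Y (y e01) (y e02) (y e03) (y e12) (y e13) (y e23) u v := by
    fin_cases u <;> fin_cases v <;> first | rfl | exact absurd rfl h
  rw [sum_edges] at hy himb ⊢
  obtain ⟨σ, hσ⟩ := hfin _ _ _ _ _ _ hy himb
  exact ⟨σ, fun e => (congrArg _ (hedge _ _ _)).trans (hσ e)⟩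

theorem exists_iso_eq_optimalLengths {m : ℕ} {w : K4.E → ℕ} (hw : ∑ e, w e = m)
    (hbal : ∀ e, w e = m / 6 ∨ w e = m / 6 + 1) (himb : imbalance w = (m % 2 : ℕ)) :
    ∃ φ : MGIso K4 K4, ∀ e, w (φ.eMap e) = optimalLengths m e := by
  obtain ⟨y, rfl⟩ := exists_eq_const_add hbal
  rw [sum_const_add] at hw
  have hr : ∑ e, (y e : ℕ) = m % 6 := by omega
  rw [imbalance_const_add, ← Nat.mod_mod_of_dvd m (show 2 ∣ 6 by norm_num), ← hr] at himb
  obtain ⟨σ, hσ⟩ := exists_perm_eq_edgeRank_lt y (hr ▸ Nat.mod_lt m (by norm_num)) himb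
  exact ⟨isoOfPerm σ, fun e => congrArg _ ((hσ e).trans (by rw [hr]))⟩

end K4

namespace Multigraph

variable {H D : Multigraph}

/-! ### Chains -/

/-- The ends of the edge `e` are `x` and `y`. -/
def Joins (H : Multigraph) (e : H.E) (x y : H.V) : Prop :=
  (H.src e = x ∧ H.tgt e = y) ∨ (H.src e = y ∧ H.tgt e = x)

/-- The edges in `F` can be arranged to a trail from `x` to `y`. -/
inductive IsChain (H : Multigraph) : H.V → H.V → Finset H.E → Prop
  | nil (x : H.V) : IsChain H x x ∅
  | cons {e : H.E} {x y z : H.V} {F : Finset H.E} (he : e ∉ F) (hxy : H.Joins e x y)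
      (hyz : IsChain H y z F) : IsChain H x z (insert e F)

theorem joins_src_tgt (e : H.E) : H.Joins e (H.src e) (H.tgt e) := Or.inl ⟨rfl, rfl⟩

theorem Joins.symm {e : H.E} {x y : H.V} (h : H.Joins e x y) : H.Joins e y x := Or.symm h

theorem exists_joins_of_mem_cutEdges_singleton {e : H.E} {v : H.V} (he : e ∈ H.cutEdges {v}) :
    ∃ u, u ≠ v ∧ H.Joins e v u := by
  simp only [mem_cutEdges, mem_singleton] at he
  by_cases hs : H.src e = v
  · exact ⟨_, he.1 hs, Or.inl ⟨hs, rfl⟩⟩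
  · exact ⟨_, hs, Or.inr ⟨rfl, not_not.1 (mt he.2 hs)⟩⟩

theorem Joins.isChain {e : H.E} {x y : H.V} (h : H.Joins e x y) : H.IsChain x y {e} :=
  .cons (notMem_empty e) h (.nil y)

theorem IsChain.union {x y z : H.V} {F F' : Finset H.E} (h : H.IsChain x y F)
    (h' : H.IsChain y z F') (hd : Disjoint F F') : H.IsChain x z (F ∪ F') := by
  induction h with
  | nil => rwa [empty_union]
  | cons he hxy _ ih =>
    rw [disjoint_insert_left] at hd
    rw [insert_union]
    exact .cons (notMem_union.2 ⟨he, hd.1⟩) hxy (ih h' hd.2)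

theorem IsChain.biUnion {b : D.V → H.V} {s : D.E → Finset H.E}
    (hs : ∀ {e x y}, D.Joins e x y → H.IsChain (b x) (b y) (s e))
    (hdisj : Pairwise fun e f => Disjoint (s e) (s f)) {x y : D.V} {F : Finset D.E}
    (h : D.IsChain x y F) : H.IsChain (b x) (b y) (F.biUnion s) := by
  induction h with
  | nil => exact .nil _
  | @cons e _ _ _ F he hxy _ ih =>
    rw [biUnion_insert]
    refine (hs hxy).union ih ((disjoint_biUnion_right _ _ _).2 fun f hf => hdisj ?_)
    exact (ne_of_mem_of_not_mem hf he).symm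

theorem IsChain.exists_list {x y : H.V} {F : Finset H.E} (h : H.IsChain x y F) :
    ∃ l : List H.E, l.Nodup ∧ l.toFinset = F ∧ ∃ node : ℕ → H.V,
      node 0 = x ∧ node l.length = y ∧
        ∀ i (hi : i < l.length), H.Joins l[i] (node i) (node (i + 1)) := by
  induction h with
  | nil x =>
    exact ⟨[], List.nodup_nil, rfl, fun _ => x, rfl, rfl, fun i hi => absurd hi i.not_lt_zero⟩
  | @cons e x _ _ _ he hxy _ ih =>
    obtain ⟨l, hl, rfl, node, rfl, rfl, hnode⟩ := ih
    refine ⟨e :: l, List.nodup_cons.2 ⟨mt List.mem_toFinset.2 he, hl⟩, List.toFinset_cons,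
      fun i => Nat.casesOn i x node, rfl, rfl, fun i hi => ?_⟩
    cases i with
    | zero => exact hxy
    | succ i => exact hnode i (by simpa using hi)

theorem isIso_of_surjective {G : Multigraph} (hV : G.nV = H.nV) (hE : G.nE = H.nE)
    {f : G.V → H.V} {g : G.E → H.E} (hf : Function.Surjective f) (hg : Function.Surjective g)
    (hfg : ∀ e, H.Joins (g e) (f (G.src e)) (f (G.tgt e))) : IsIso G H :=
  ⟨⟨.ofBijective f ((Fintype.bijective_iff_surjective_and_card f).2 ⟨hf, hV⟩),
    .ofBijective g ((Fintype.bijective_iff_surjective_and_card g).2 ⟨hg, hE⟩), hfg⟩⟩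

theorem nE_subdivide (w : D.E → ℕ) : (subdivide D w).nE = ∑ c, w c :=
  Fintype.card_sigma.trans (sum_congr rfl fun c _ => Fintype.card_fin (w c))

theorem card_fiber_fst (w : D.E → ℕ) (c : D.E) :
    #(fiber (Sigma.fst : (subdivide D w).E → D.E) c) = w c := by
  rw [fiber, ← Fintype.card_subtype]
  exact (Fintype.card_congr (Equiv.sigmaSubtype c)).trans (Fintype.card_fin (w c))

theorem nV_subdivide (w : D.E → ℕ) :
    (subdivide D w).nV = Fintype.card (Quot (zeroRel D w)) + ∑ c, (w c - 1) :=
  Fintype.card_sum.trans <| congrArg _ <|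
    Fintype.card_sigma.trans (sum_congr rfl fun c _ => Fintype.card_fin (w c - 1))

theorem zeroAcyclic_iff {w : D.E → ℕ} :
    ZeroAcyclic D w ↔ (subdivide D w).nV + D.nE = (subdivide D w).nE + D.nV := by
  have hsum : ∑ c, (w c - 1) + D.nE = ∑ c, w c + #(univ.filter fun c => w c = 0) := by
    rw [nE, ← card_univ, card_eq_sum_ones, card_filter, ← sum_add_distrib, ← sum_add_distrib]
    refine sum_congr rfl fun c _ => ?_
    split_ifs <;> omega
  rw [ZeroAcyclic, nV_subdivide, nE_subdivide, nV]
  omega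

theorem isIso_subdivide_of_nodes {w : D.E → ℕ} (hV : (subdivide D w).nV = H.nV)
    (hE : ∑ c, w c = H.nE) (hinc : ∀ v, ∃ e, H.src e = v ∨ H.tgt e = v)
    {b : D.V → H.V} {node : D.E → ℕ → H.V} (hsrc : ∀ c, node c 0 = b (D.src c))
    (htgt : ∀ c, node c (w c) = b (D.tgt c)) {g : (Σ c, Fin (w c)) → H.E}
    (hg : Function.Surjective g)
    (hjoins : ∀ c i, H.Joins (g ⟨c, i⟩) (node c i) (node c (i + 1))) :
    IsIso (subdivide D w) H := by
  have hzero (u v : D.V) : zeroRel D w u v → b u = b v := by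
    rintro ⟨c, hc, rfl, rfl⟩
    rw [← hsrc, ← htgt, hc]
  let f : (subdivide D w).V → H.V := Sum.elim (Quot.lift b hzero) fun p => node p.1 (p.2 + 1)
  have hf (c : D.E) (j : ℕ) (hj : j ≤ w c) : f (chainNode D w c j) = node c j := by
    rcases j with _ | j
    · rw [chainNode_zero, hsrc]
      rfl
    · rcases hj.lt_or_eq with hlt | heq
      · rw [chainNode_succ _ c ⟨j, by omega⟩]
        rfl
      · rw [heq, chainNode_length, htgt]
        rfl
  have hfg (e : (subdivide D w).E) :
      H.Joins (g e) (f ((subdivide D w).src e)) (f ((subdivide D w).tgt e)) := by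
    have := hjoins e.1 e.2
    rwa [← hf _ _ e.2.2.le, ← hf _ _ e.2.2] at this
  refine isIso_of_surjective hV ((nE_subdivide w).trans hE) (fun v => ?_) hg hfg
  obtain ⟨e, he⟩ := hinc v
  obtain ⟨a, rfl⟩ := hg e
  rcases he with rfl | rfl <;> rcases hfg a with ⟨h1, h2⟩ | ⟨h1, h2⟩
  exacts [⟨_, h1.symm⟩, ⟨_, h1.symm⟩, ⟨_, h2.symm⟩, ⟨_, h2.symm⟩]

theorem isIso_subdivide_of_isChain {κ : H.E → D.E} {b : D.V → H.V}
    (hb : ∀ c, H.IsChain (b (D.src c)) (b (D.tgt c)) (fiber κ c))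
    (hinc : ∀ v, ∃ e, H.src e = v ∨ H.tgt e = v)
    (hV : (subdivide D fun c => #(fiber κ c)).nV = H.nV) :
    IsIso (subdivide D fun c => #(fiber κ c)) H := by
  choose l hl hlF node hsrc htgt hjoins using fun c => (hb c).exists_list
  have hE : ∑ c, #(fiber κ c) = H.nE :=
    (card_eq_sum_card_fiberwise fun e _ => mem_univ (κ e)).symm
  obtain hw : (fun c => #(fiber κ c)) = fun c => (l c).length :=
    funext fun c => by rw [← hlF, List.toFinset_card_of_nodup (hl c)]
  simp only [hw] at hV ⊢
  simp only [congrFun hw] at hE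
  refine isIso_subdivide_of_nodes hV hE hinc hsrc htgt (g := fun p => (l p.1)[p.2])
    (fun e => ?_) fun c i => hjoins c i i.2
  have he : e ∈ l (κ e) := by rw [← List.mem_toFinset, hlF, mem_fiber]
  obtain ⟨i, hi, hie⟩ := List.mem_iff_getElem.1 he
  exact ⟨⟨κ e, i, hi⟩, hie⟩

end Multigraph

namespace Multigraph

variable {G H D : Multigraph} {M : Type*} [AddCommGroup M] [Module (ZMod 2) M]

/-! ### Isomorphisms from colourings -/

theorem isIso_of_forall_src_or_tgt (hV : G.nV = H.nV) (hE : G.nE = H.nE)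
    (hG : ∀ e v, G.src e = v ∨ G.tgt e = v) (hH : ∀ e v, H.src e = v ∨ H.tgt e = v) :
    IsIso G H := by
  let f := Fintype.equivOfCardEq hV
  let g := Fintype.equivOfCardEq hE
  refine ⟨f, g, fun e => ?_⟩
  have hcov (u : H.V) : f (G.src e) = u ∨ f (G.tgt e) = u := by
    rw [← f.eq_symm_apply, ← f.eq_symm_apply]
    exact hG e _
  have hsrc := hcov (H.src (g e))
  have htgt := hcov (H.tgt (g e))
  have hs := hH (g e) (f (G.src e))
  have ht := hH (g e) (f (G.tgt e))
  grind

theorem exists_equiv_comp_eq {α β γ : Type*} [Fintype α] [Fintype β] {κ : α → γ} {κ' : β → γ}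
    (h : ∀ c, #(fiber κ c) = #(fiber κ' c)) : ∃ ψ : α ≃ β, κ' ∘ ψ = κ := by
  have hcard (c : γ) : Nonempty ({a // κ a = c} ≃ {b // κ' b = c}) := by
    refine Fintype.card_eq.1 ?_
    rw [Fintype.card_subtype, Fintype.card_subtype]
    exact h c
  exact ⟨.ofFiberEquiv fun c => (hcard c).some, funext (Equiv.ofFiberEquiv_map _)⟩

theorem IsCographicRep.src_ne_tgt_of_cutEdges_subset {P : D.E → M} (hP : D.IsCographicRep P)
    {κ : H.E → D.E} (h : H.IsCographicRep (P ∘ κ)) {A : Finset D.V}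
    (hA : ∀ c ∈ D.cutEdges A, ∃ e, κ e = c) {e : H.E} (he : κ e ∈ D.cutEdges A) :
    H.src e ≠ H.tgt e := by
  have hsec (c : D.E) (hc : c ∈ D.cutEdges A) : ∃ f, κ f = c ∧ (c = κ e → f = e) := by
    by_cases hce : c = κ e
    · exact ⟨e, hce.symm, fun _ => rfl⟩
    · exact (hA c hc).imp fun f hf => ⟨hf, fun h => absurd h hce⟩
  have : Nonempty H.E := ⟨e⟩
  choose! s hs hse using hsec
  refine h.src_ne_tgt (F := (D.cutEdges A).image s) ?_
    (mem_image.2 ⟨κ e, he, hse _ he rfl⟩)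
  rw [sum_image fun c hc d hd hcd => by rw [← hs c hc, hcd, hs d hd]]
  exact (sum_congr rfl fun c hc => congrArg P (hs c hc)).trans (hP.sum_cutEdges A)

theorem IsCographicRep.exists_cutEdges_eq_map {ℓ : H.E → M} (hH : H.IsCographicRep ℓ)
    (ψ : G.E ≃ H.E) (hG : G.IsCographicRep (ℓ ∘ ψ)) (A : Finset G.V) :
    ∃ B, H.cutEdges B = (G.cutEdges A).map ψ.toEmbedding := by
  refine (hH.sum_eq_zero_iff _).1 ?_
  rw [sum_map]
  exact hG.sum_cutEdges A

theorem exists_iso_of_cutEdges_singleton (hconn : G.Connected) (hV : G.nV = H.nV) (h3 : 3 ≤ G.nV)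
    (hloop : ∀ e, G.src e ≠ G.tgt e) (ψ : G.E ≃ H.E)
    (hstar : ∀ v, ∃ u, H.cutEdges {u} = (G.cutEdges {v}).map ψ.toEmbedding) :
    ∃ φ : MGIso G H, φ.eMap = ψ := by
  choose f hf using hstar
  have hmem (v : G.V) (e : G.E) : e ∈ G.cutEdges {v} ↔ ψ e ∈ H.cutEdges {f v} := by
    rw [hf]
    exact (mem_map' _).symm
  have hinj : Function.Injective f := by
    intro u v huv
    by_contra hne
    have hcut : G.cutEdges {u, v} = ∅ := by
      refine eq_empty_of_forall_notMem fun e he => ?_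
      have h := (hmem u e).trans (huv ▸ (hmem v e).symm)
      simp only [mem_cutEdges, mem_insert, mem_singleton] at h he
      grind
    rcases hconn.eq_empty_or_univ_of_cutEdges hcut with h | h
    · exact insert_ne_empty _ _ h
    · have := card_pair hne
      rw [h, card_univ, ← nV] at this
      omega
  refine ⟨⟨.ofBijective f ((Fintype.bijective_iff_injective_and_card f).2 ⟨hinj, hV⟩), ψ,
    fun e => ?_⟩, rfl⟩
  have hs := (hmem (G.src e) e).1 (by simpa [mem_cutEdges] using (hloop e).symm)
  have ht := (hmem (G.tgt e) e).1 (by simpa [mem_cutEdges] using hloop e)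
  have hne := hinj.ne (hloop e)
  simp only [mem_cutEdges, mem_singleton] at hs ht
  simp only [Equiv.ofBijective_apply]
  grind

theorem cutEdges_compl (A : Finset H.V) : H.cutEdges Aᶜ = H.cutEdges A := by
  ext e
  simp only [mem_cutEdges, mem_compl]
  tauto

theorem exists_cutEdges_singleton_eq (hV : H.nV = 3) {A : Finset H.V}
    (hA : (H.cutEdges A).Nonempty) : ∃ u, H.cutEdges {u} = H.cutEdges A := by
  obtain ⟨e, he⟩ := hA
  rw [mem_cutEdges] at he
  have hpos : 0 < #A ∧ 0 < #Aᶜ := by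
    simp only [card_pos]
    by_cases hs : H.src e ∈ A
    · exact ⟨⟨_, hs⟩, _, mem_compl.2 (he.1 hs)⟩
    · exact ⟨⟨_, not_not.1 (mt he.2 hs)⟩, _, mem_compl.2 hs⟩
  have hcard : #A + #Aᶜ = 3 := (card_add_card_compl A).trans hV
  obtain h | h : #A = 1 ∨ #Aᶜ = 1 := by omega
  · obtain ⟨u, rfl⟩ := card_eq_one.1 h
    exact ⟨u, rfl⟩
  · obtain ⟨u, hu⟩ := card_eq_one.1 h
    exact ⟨u, hu ▸ cutEdges_compl A⟩

end Multigraph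

namespace Multigraph

variable {H D : Multigraph} {v u : H.V} {e f : H.E}

/-! ### Suppression of a vertex of degree two -/

/-- The map on vertices that moves `v` to `u`. -/
def moveVertex (hu : u ≠ v) (x : H.V) : {x // x ≠ v} := if hx : x = v then ⟨u, hu⟩ else ⟨x, hx⟩

theorem moveVertex_self (hu : u ≠ v) : moveVertex hu v = ⟨u, hu⟩ := dif_pos rfl

theorem moveVertex_of_ne (hu : u ≠ v) {x : H.V} (hx : x ≠ v) : moveVertex hu x = ⟨x, hx⟩ :=
  dif_neg hx

theorem moveVertex_surjective (hu : u ≠ v) : Function.Surjective (moveVertex hu) :=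
  fun x => ⟨x.1, moveVertex_of_ne hu x.2⟩

theorem contracts_moveVertex (hu : u ≠ v) (he : H.Joins e v u) :
    H.Contracts (moveVertex hu) (univ.erase e) := by
  intro x
  have hx : (∀ g ∉ univ.erase e, H.coboundary x g = 0) ↔ x v = x u := by
    simp only [mem_erase, mem_univ, and_true, not_not, forall_eq, coboundary_apply_eq_zero]
    rcases he with ⟨rfl, rfl⟩ | ⟨rfl, rfl⟩
    exacts [Iff.rfl, eq_comm]
  rw [hx]
  constructor
  · intro h
    refine ⟨fun y => x y.1, funext fun y => ?_⟩
    rw [Function.comp_apply]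
    by_cases hy : y = v
    · rw [hy, moveVertex_self, h]
    · rw [moveVertex_of_ne hu hy]
  · rintro ⟨z, rfl⟩
    simp only [Function.comp_apply, moveVertex_self, moveVertex_of_ne hu hu]

/-- The edges of `H` replacing the edge `g` of the graph in which `e` is contracted onto `f`. -/
def expandEdge (e f : H.E) (g : {g // g ∈ univ.erase e}) : Finset H.E :=
  if g.1 = f then {e, f} else {g.1}

theorem mem_expandEdge {e f a : H.E} {g : {g // g ∈ univ.erase e}} :
    a ∈ expandEdge e f g ↔ a = g.1 ∨ a = e ∧ g.1 = f := by
  rw [expandEdge]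
  split_ifs with h
  · rw [mem_insert, mem_singleton, h]
    tauto
  · rw [mem_singleton]
    tauto

theorem pairwise_disjoint_expandEdge (e f : H.E) :
    Pairwise fun g g' => Disjoint (expandEdge e f g) (expandEdge e f g') := by
  intro g g' hne
  refine disjoint_left.2 fun a ha ha' => hne (Subtype.ext ?_)
  have hg := ne_of_mem_erase g.2
  have hg' := ne_of_mem_erase g'.2
  rw [mem_expandEdge] at ha ha'
  grind

theorem biUnion_expandEdge (hu : u ≠ v) {κ : H.E → D.E} (hef : e ≠ f) (hκ : κ e = κ f) (c : D.E) :
    (fiber (α := (H.mapVertices (moveVertex hu) (univ.erase e)).E) (fun g => κ g.1) c).biUnion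
      (expandEdge e f) = fiber κ c := by
  ext a
  refine mem_biUnion.trans ?_
  simp only [mem_fiber]
  constructor
  · rintro ⟨g, rfl, ha⟩
    rcases mem_expandEdge.1 ha with rfl | ⟨rfl, hg⟩
    · rfl
    · rw [hg, hκ]
  · rintro rfl
    by_cases ha : a = e
    · exact ⟨⟨f, mem_erase.2 ⟨hef.symm, mem_univ f⟩⟩, ha ▸ hκ.symm,
        mem_expandEdge.2 (Or.inr ⟨ha, rfl⟩)⟩
    · exact ⟨⟨a, mem_erase.2 ⟨ha, mem_univ a⟩⟩, rfl, mem_expandEdge.2 (Or.inl rfl)⟩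

theorem surjective_subtype_erase {κ : H.E → D.E} (hκ : Function.Surjective κ) (hef : e ≠ f)
    (h : κ e = κ f) : Function.Surjective fun g : {g // g ∈ univ.erase e} => κ g.1 := by
  intro c
  obtain ⟨g, rfl⟩ := hκ c
  by_cases hg : g = e
  · exact ⟨⟨f, mem_erase.2 ⟨hef.symm, mem_univ f⟩⟩, hg ▸ h.symm⟩
  · exact ⟨⟨g, mem_erase.2 ⟨hg, mem_univ g⟩⟩, rfl⟩

theorem Joins.of_mapVertices {W : Type} [Fintype W] {r : H.V → W} {S : Finset H.E}
    {g : {g // g ∈ S}} {x y : W} (hxy : (H.mapVertices r S).Joins g x y) {p q : H.V}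
    (hpq : H.Joins g.1 p q) : (r p = x ∧ r q = y) ∨ (r p = y ∧ r q = x) := by
  rcases hpq with ⟨rfl, rfl⟩ | ⟨rfl, rfl⟩
  · exact hxy
  · exact hxy.symm.imp And.symm And.symm

theorem isChain_expandEdge (hloop : ∀ g, H.src g ≠ H.tgt g) (hu : u ≠ v) (hev : H.Joins e v u)
    (hef : e ≠ f) (hv : H.cutEdges {v} = {e, f}) {g : {g // g ∈ univ.erase e}} {x y : {x // x ≠ v}}
    (hxy : (H.mapVertices (moveVertex hu) (univ.erase e)).Joins g x y) :
    H.IsChain x.1 y.1 (expandEdge e f g) := by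
  have hmem (a : H.E) : H.src a = v ∨ H.tgt a = v ↔ a = e ∨ a = f := by
    have h := congrArg (a ∈ ·) hv
    have := hloop a
    simp only [mem_cutEdges, mem_singleton, mem_insert, eq_iff_iff] at h
    grind
  by_cases hgf : g.1 = f
  · obtain ⟨p, hp, hfp⟩ : ∃ p, p ≠ v ∧ H.Joins g.1 v p := by
      have hne := hloop g.1
      rcases (hmem g.1).2 (Or.inr hgf) with h | h
      · exact ⟨_, h ▸ hne.symm, Or.inl ⟨h, rfl⟩⟩
      · exact ⟨_, h ▸ hne, Or.inr ⟨rfl, h⟩⟩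
    rw [expandEdge, if_pos hgf]
    have hends := hxy.of_mapVertices hfp
    rw [moveVertex_self, moveVertex_of_ne hu hp] at hends
    rw [hgf] at hfp
    rcases hends with ⟨rfl, rfl⟩ | ⟨rfl, rfl⟩
    · exact .cons (by simpa using hef) hev.symm hfp.isChain
    · rw [pair_comm]
      exact .cons (by simpa using hef.symm) hfp.symm hev.isChain
  · have hne := mt (hmem g.1).1 (not_or.2 ⟨ne_of_mem_erase g.2, hgf⟩)
    rw [not_or] at hne
    have hends := hxy.of_mapVertices (joins_src_tgt g.1)
    rw [moveVertex_of_ne hu hne.1, moveVertex_of_ne hu hne.2] at hends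
    rw [expandEdge, if_neg hgf]
    refine Joins.isChain ?_
    rcases hends with ⟨rfl, rfl⟩ | ⟨rfl, rfl⟩
    exacts [joins_src_tgt _, (joins_src_tgt _).symm]

theorem IsChain.of_mapVertices (hloop : ∀ g, H.src g ≠ H.tgt g) (hu : u ≠ v)
    (hev : H.Joins e v u) (hef : e ≠ f) (hv : H.cutEdges {v} = {e, f}) {κ : H.E → D.E}
    (hκ : κ e = κ f) {x y : {x // x ≠ v}} {c : D.E}
    (h : (H.mapVertices (moveVertex hu) (univ.erase e)).IsChain x y (fiber (fun g => κ g.1) c)) :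
    H.IsChain x.1 y.1 (fiber κ c) := by
  rw [← biUnion_expandEdge hu hef hκ]
  exact h.biUnion (isChain_expandEdge hloop hu hev hef hv) (pairwise_disjoint_expandEdge e f)

end Multigraph

namespace K4

variable {H : Multigraph} {κ : H.E → K4.E}

/-! ### Colourings by the edges of `K₄` -/

theorem edgeRank_lt (c : K4.E) : edgeRank c < 6 := by
  revert c
  decide

theorem finrank_span_range_label_comp {α : Type*} {κ : α → K4.E}
    (hκ : ∀ c, edgeRank c < 3 → ∃ a, κ a = c) :
    Module.finrank (ZMod 2) (Submodule.span (ZMod 2) (Set.range (label ∘ κ))) = 3 := by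
  have hmem (c : K4.E) (hc : edgeRank c < 3) :
      label c ∈ Submodule.span (ZMod 2) (Set.range (label ∘ κ)) := by
    obtain ⟨a, rfl⟩ := hκ c hc
    exact Submodule.subset_span ⟨a, rfl⟩
  have hspan : ∀ z, ∃ a b c : ZMod 2, a • label e01 + b • label e23 + c • label e02 = z := by
    decide
  have htop : Submodule.span (ZMod 2) (Set.range (label ∘ κ)) = ⊤ := by
    refine Submodule.eq_top_iff'.2 fun z => ?_
    obtain ⟨a, b, c, rfl⟩ := hspan z
    refine add_mem (add_mem ?_ ?_) ?_ <;>
      exact Submodule.smul_mem _ _ (hmem _ (by decide))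
  rw [htop, finrank_top, Multigraph.finrank_labelSpace]

theorem nE_eq_nV_add_two (hH : H.Connected) (h : H.IsCographicRep (label ∘ κ))
    (hκ : ∀ c, edgeRank c < 3 → ∃ e, κ e = c) : H.nE = H.nV + 2 := by
  obtain ⟨e, -⟩ := hκ e01 (by decide)
  have : Nonempty H.V := ⟨H.src e⟩
  have := h.nE_add_one hH
  rw [finrank_span_range_label_comp hκ] at this
  omega

theorem exists_mem_cutEdges_edgeRank_le (c : K4.E) :
    ∃ A, c ∈ K4.cutEdges A ∧ ∀ a ∈ K4.cutEdges A, edgeRank a ≤ max 3 (edgeRank c) := by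
  have h : ∀ c : K4.E, ∃ A : Finset (Fin 4), (c.1.1 ∈ A ↔ c.1.2 ∉ A) ∧
      ∀ a : K4.E, (a.1.1 ∈ A ↔ a.1.2 ∉ A) → edgeRank a ≤ max 3 (edgeRank c) := by decide +kernel
  obtain ⟨A, hc, hA⟩ := h c
  exact ⟨A, Multigraph.mem_cutEdges.2 hc, fun a ha => hA a (Multigraph.mem_cutEdges.1 ha)⟩

theorem src_ne_tgt {m : ℕ} (hm : 4 ≤ m) (h : H.IsCographicRep (label ∘ κ))
    (hκ : ∀ c, edgeRank c < m ↔ ∃ e, κ e = c) (e : H.E) : H.src e ≠ H.tgt e := by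
  obtain ⟨A, he, hA⟩ := exists_mem_cutEdges_edgeRank_le (κ e)
  refine isCographicRep_label.src_ne_tgt_of_cutEdges_subset h (fun c hc => (hκ c).1 ?_) he
  exact (hA c hc).trans_lt (max_lt hm ((hκ _).2 ⟨e, rfl⟩))

theorem exists_cutEdges_singleton_eq_of_card {A : Finset (Fin 4)} (hA : #(K4.cutEdges A) = 3) :
    ∃ v : Fin 4, K4.cutEdges {v} = K4.cutEdges A := by
  have h : ∀ A : Finset (Fin 4),
      #{e : {p : Fin 4 × Fin 4 // p.1 < p.2} | e.1.1 ∈ A ↔ e.1.2 ∉ A} = 3 →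
        ∃ v, ∀ e : K4.E, (e.1.1 = v ↔ e.1.2 ≠ v) ↔ (e.1.1 ∈ A ↔ e.1.2 ∉ A) := by decide +kernel
  have hcut : K4.cutEdges A =
      ({e | e.1.1 ∈ A ↔ e.1.2 ∉ A} : Finset {p : Fin 4 × Fin 4 // p.1 < p.2}) :=
    Finset.ext fun e => Multigraph.mem_cutEdges.trans <| Iff.symm <|
      mem_filter_univ (p := fun e : {p : Fin 4 × Fin 4 // p.1 < p.2} => e.1.1 ∈ A ↔ e.1.2 ∉ A) e
  obtain ⟨v, hv⟩ := h A (hcut ▸ hA)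
  refine ⟨v, Finset.ext fun e => Multigraph.mem_cutEdges.trans <| Iff.trans ?_ <|
    (hv e).trans (Multigraph.mem_cutEdges (H := K4)).symm⟩
  exact iff_congr mem_singleton (not_congr mem_singleton)

theorem exists_cutEdges_singleton_eq_pair (h : H.IsCographicRep (label ∘ κ)) {v : H.V}
    (hne : (H.cutEdges {v}).Nonempty) (hlt : #(H.cutEdges {v}) < 3) :
    ∃ e f, e ≠ f ∧ κ e = κ f ∧ H.cutEdges {v} = {e, f} := by
  have hinj : ¬ Set.InjOn (label ∘ κ) (H.cutEdges {v}) := fun hinj =>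
    hlt.not_ge <| Multigraph.three_le_card_of_sum_eq_zero hne hinj
      (fun e _ => label_ne_zero (κ e)) (h.sum_cutEdges {v})
  simp only [Set.InjOn, mem_coe, not_forall] at hinj
  obtain ⟨e, he, f, hf, hef, hne⟩ := hinj
  refine ⟨e, f, hne, label_injective hef, (eq_of_subset_of_card_le ?_ ?_).symm⟩
  · exact insert_subset he (singleton_subset_iff.2 hf)
  · rw [card_pair hne]
    omega

theorem exists_iso_of_three_le_card (hH : H.Connected) (h : H.IsCographicRep (label ∘ κ))
    (hκ : Function.Surjective κ) (h3 : ∀ v, 3 ≤ #(H.cutEdges {v})) :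
    ∃ φ : MGIso H K4, φ.eMap = κ := by
  have hrank := nE_eq_nV_add_two hH h fun c _ => hκ c
  have hcard : 6 ≤ H.nE := Fintype.card_le_of_surjective κ hκ
  have hsum : ∑ v : H.V, 3 ≤ ∑ v, #(H.cutEdges {v}) := sum_le_sum fun v _ => h3 v
  have hsum' := H.sum_card_cutEdges_singleton_le
  have hconst : ∑ _v : H.V, 3 = H.nV * 3 := by rw [sum_const, smul_eq_mul, card_univ, Multigraph.nV]
  have hstar (v : H.V) : 3 = #(H.cutEdges {v}) :=
    (sum_eq_sum_iff_of_le fun v _ => h3 v).1 (by omega) v (mem_univ v)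
  let ψ : H.E ≃ K4.E := .ofBijective κ <|
    (Fintype.bijective_iff_surjective_and_card κ).2 ⟨hκ, (by omega : H.nE = 6)⟩
  have hloop := src_ne_tgt (m := 6) (by norm_num) h fun c =>
    iff_of_true (edgeRank_lt c) (hκ c)
  obtain ⟨φ, hφ⟩ := Multigraph.exists_iso_of_cutEdges_singleton (H := K4) hH
    (by omega : H.nV = 4) (by omega) hloop ψ fun v => by
      obtain ⟨B, hB⟩ := isCographicRep_label.exists_cutEdges_eq_map ψ h {v}
      rw [← hB]
      exact exists_cutEdges_singleton_eq_of_card (by rw [hB, card_map, hstar])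
  exact ⟨φ, congrArg (⇑) hφ⟩

theorem exists_isChain (hH : H.Connected) (h : H.IsCographicRep (label ∘ κ))
    (hκ : Function.Surjective κ) :
    ∃ b : K4.V → H.V, ∀ c, H.IsChain (b (K4.src c)) (b (K4.tgt c)) (Multigraph.fiber κ c) := by
  induction hn : H.nV using Nat.strong_induction_on generalizing H with
  | _ n ih =>
  by_cases h3 : ∀ v, 3 ≤ #(H.cutEdges {v})
  · obtain ⟨φ, rfl⟩ := exists_iso_of_three_le_card hH h hκ h3
    refine ⟨φ.vMap.symm, fun c => ?_⟩
    obtain ⟨e, rfl⟩ := φ.eMap.surjective c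
    have hfiber : Multigraph.fiber φ.eMap (φ.eMap e) = {e} := by
      ext f
      rw [Multigraph.mem_fiber, mem_singleton, φ.eMap.apply_eq_iff_eq]
    rw [hfiber]
    refine Multigraph.Joins.isChain ?_
    simp only [Multigraph.Joins, Equiv.eq_symm_apply]
    exact (φ.ends_eq e).imp (.imp .symm .symm) fun h => ⟨h.2.symm, h.1.symm⟩
  · push Not at h3
    obtain ⟨v, hv⟩ := h3
    have hloop := src_ne_tgt (m := 6) (by norm_num) h fun c =>
      iff_of_true (edgeRank_lt c) (hκ c)
    have hV : 2 ≤ H.nV := by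
      have hcard : 6 ≤ H.nE := Fintype.card_le_of_surjective κ hκ
      have := nE_eq_nV_add_two hH h fun c _ => hκ c
      omega
    obtain ⟨e, f, hef, hκe, hpair⟩ := exists_cutEdges_singleton_eq_pair h
      (hH.cutEdges_singleton_nonempty hV v) hv
    obtain ⟨u, hu, hev⟩ := Multigraph.exists_joins_of_mem_cutEdges_singleton (e := e) (v := v)
      (hpair ▸ mem_insert_self e {f})
    have hr := Multigraph.contracts_moveVertex hu hev
    let K := H.mapVertices (Multigraph.moveVertex hu) (univ.erase e)
    let κ' : K.E → K4.E := fun g => κ g.1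
    have hKV : K.nV < n := by
      rw [← hn]
      exact Fintype.card_subtype_lt (not_not.2 rfl : ¬ v ≠ v)
    have hκ' : Function.Surjective κ' := Multigraph.surjective_subtype_erase hκ hef hκe
    have hK : K.IsCographicRep (label ∘ κ') := h.mapVertices hr
    obtain ⟨b, hb⟩ := ih _ hKV (hH.mapVertices hr (Multigraph.moveVertex_surjective hu)) hK hκ' rfl
    exact ⟨fun k => (b k).1, fun c => (hb c).of_mapVertices hloop hu hev hef hpair hκe⟩

end K4

namespace K4

variable {G H : Multigraph} {m : ℕ} {κ : H.E → K4.E}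

/-! ### Reconstruction of the optimal graph from its colouring -/

theorem optimalLengths_pos_iff {c : K4.E} : 0 < optimalLengths m c ↔ edgeRank c < m := by
  have := edgeRank_lt c
  rw [optimalLengths]
  split_ifs <;> omega

/-- A colouring of the edges of `H` by the edges of `K₄`, with colour classes of the sizes of the
chains of the optimal graph with `m` edges, which determines the cuts of `H` from those of `K₄`. -/
structure IsOptimalColouring (H : Multigraph) (m : ℕ) (κ : H.E → K4.E) : Prop where
  connected : H.Connected
  isCographicRep : H.IsCographicRep (label ∘ κ)
  card_fiber c : #(Multigraph.fiber κ c) = optimalLengths m c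

theorem isOptimalColouring_subdivide (m : ℕ) :
    IsOptimalColouring (subdivide K4 (optimalLengths m)) m Sigma.fst where
  connected := connected.subdivide _
  isCographicRep := Multigraph.isCographicRep_subdivide isCographicRep_label _
  card_fiber := Multigraph.card_fiber_fst _

namespace IsOptimalColouring

theorem edgeRank_lt_iff (h : IsOptimalColouring H m κ) (c : K4.E) :
    edgeRank c < m ↔ ∃ e, κ e = c := by
  rw [← optimalLengths_pos_iff, ← h.card_fiber, card_pos]
  exact exists_congr fun e => Multigraph.mem_fiber

theorem nE_eq (h : IsOptimalColouring H m κ) : H.nE = m := by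
  rw [← sum_optimalLengths m, ← funext h.card_fiber, Multigraph.sum_card_fiber, Multigraph.nE]

theorem nV_add_two (h : IsOptimalColouring H m κ) (hm : 3 ≤ m) : H.nV + 2 = m := by
  rw [← h.nE_eq]
  exact (nE_eq_nV_add_two h.connected h.isCographicRep fun c hc =>
    (h.edgeRank_lt_iff c).1 (hc.trans_le hm)).symm

theorem src_ne_tgt (h : IsOptimalColouring H m κ) (hm : 4 ≤ m) (e : H.E) : H.src e ≠ H.tgt e :=
  K4.src_ne_tgt hm h.isCographicRep h.edgeRank_lt_iff e

theorem src_eq_or_tgt_eq (h : IsOptimalColouring H m κ) (hm : m = 3 ∨ m = 4) (e : H.E) (v : H.V) :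
    H.src e = v ∨ H.tgt e = v := by
  have hV := h.nV_add_two (by omega)
  rcases hm with hm | hm
  · exact Or.inl (Fintype.card_le_one_iff.1 (by rw [← Multigraph.nV]; omega) _ _)
  · by_contra! hne
    have hcard := card_le_univ {H.src e, H.tgt e, v}
    rw [card_eq_three.2 ⟨_, _, _, h.src_ne_tgt hm.ge e, hne.1, hne.2, rfl⟩,
      ← Multigraph.nV] at hcard
    omega

theorem isIso_of_five {κ' : G.E → K4.E} (hG : IsOptimalColouring G 5 κ')
    (hH : IsOptimalColouring H 5 κ) : IsIso G H := by
  have hGV := hG.nV_add_two (by norm_num)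
  have hHV := hH.nV_add_two (by norm_num)
  obtain ⟨ψ, rfl⟩ := Multigraph.exists_equiv_comp_eq (κ := κ') (κ' := κ)
    fun c => (hG.card_fiber c).trans (hH.card_fiber c).symm
  obtain ⟨φ, -⟩ := Multigraph.exists_iso_of_cutEdges_singleton hG.connected
    (by omega : G.nV = H.nV) (by omega) (hG.src_ne_tgt (by norm_num)) ψ fun v => by
      obtain ⟨B, hB⟩ := hH.isCographicRep.exists_cutEdges_eq_map ψ hG.isCographicRep {v}
      rw [← hB]
      refine Multigraph.exists_cutEdges_singleton_eq (by omega) ?_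
      rw [hB, map_nonempty]
      exact hG.connected.cutEdges_singleton_nonempty (by omega) v
  exact ⟨φ⟩

theorem isIso_of_six_le (hH : IsOptimalColouring H m κ) (hm : 6 ≤ m) :
    IsIso (subdivide K4 (optimalLengths m)) H := by
  have hV := hH.nV_add_two (by omega)
  have hV' := (isOptimalColouring_subdivide m).nV_add_two (by omega)
  obtain ⟨b, hb⟩ := exists_isChain hH.connected hH.isCographicRep fun c =>
    (hH.edgeRank_lt_iff c).1 ((edgeRank_lt c).trans_le hm)
  rw [← funext hH.card_fiber] at hV' ⊢
  refine Multigraph.isIso_subdivide_of_isChain hb (fun v => ?_) (by omega)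
  obtain ⟨e, he⟩ := hH.connected.cutEdges_singleton_nonempty (by omega) v
  rw [Multigraph.mem_cutEdges, mem_singleton, mem_singleton] at he
  exact ⟨e, by tauto⟩

theorem isIso (hH : IsOptimalColouring H m κ) (hm : 3 ≤ m) :
    IsIso (subdivide K4 (optimalLengths m)) H := by
  have hG := isOptimalColouring_subdivide m
  obtain hm' | rfl | hm' : (m = 3 ∨ m = 4) ∨ m = 5 ∨ 6 ≤ m := by omega
  · have hHV := hH.nV_add_two hm
    have hGV := hG.nV_add_two hm
    exact Multigraph.isIso_of_forall_src_or_tgt (by omega) (hG.nE_eq.trans hH.nE_eq.symm)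
      (hG.src_eq_or_tgt_eq hm') (hH.src_eq_or_tgt_eq hm')
  · exact hG.isIso_of_five hH
  · exact hH.isIso_of_six_le hm'

end IsOptimalColouring

end K4

/-! ### Optimality -/

theorem IsIso.refl (G : Multigraph) : IsIso G G :=
  ⟨⟨Equiv.refl _, Equiv.refl _, fun _ => Or.inl ⟨rfl, rfl⟩⟩⟩

namespace K4

variable {G H : Multigraph} {m n : ℕ}

theorem exists_isOptimalColouring {κ : H.E → K4.E} (hH : H.Connected)
    (h : H.IsCographicRep (label ∘ κ)) (hE : H.nE = m)
    (hbal : ∀ c, #(Multigraph.fiber κ c) = m / 6 ∨ #(Multigraph.fiber κ c) = m / 6 + 1)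
    (himb : imbalance (fun c => #(Multigraph.fiber κ c)) = (m % 2 : ℕ)) :
    ∃ κ', IsOptimalColouring H m κ' := by
  have hsum : ∑ c, #(Multigraph.fiber κ c) = m := (Multigraph.sum_card_fiber κ).trans hE
  obtain ⟨φ, hφ⟩ := exists_iso_eq_optimalLengths hsum hbal himb
  have hκ : κ = φ.eMap ∘ φ.eMap.symm ∘ κ := by
    funext e
    exact (φ.eMap.apply_symm_apply _).symm
  refine ⟨φ.eMap.symm ∘ κ, hH, ?_, fun c => ?_⟩
  · rw [hκ] at h
    exact (isCographicRep_label.comp_iso φ).comp_congr isCographicRep_label h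
  · rw [← hφ]
    congr 1
    ext e
    simp only [Multigraph.mem_fiber, Function.comp_apply, Equiv.symm_apply_eq]

/-- The label `(1, 1, 1)` does not occur on `K₄`, so it has to be avoided. -/
theorem exists_colouring (hH : H.Connected) [Nonempty H.V] (hm : H.nE = H.nV + 2) :
    ∃ (ℓ : H.E → Multigraph.LabelSpace) (κ : H.E → K4.E),
      H.IsCographicRep ℓ ∧ ∀ e, ℓ e ≠ 0 → label (κ e) = ℓ e := by
  obtain ⟨ℓ, hℓ, hne⟩ := Multigraph.exists_isCographicRep_ne hH hm (z := (1, 1, 1)) (by decide)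
  have hlabel (e : H.E) : ∃ c, ℓ e ≠ 0 → label c = ℓ e := by
    by_cases h0 : ℓ e = 0
    · exact ⟨e01, fun h => absurd h0 h⟩
    · obtain ⟨c, hc⟩ := exists_label_eq _ h0 (hne e)
      exact ⟨c, fun _ => hc⟩
  choose κ hκ using hlabel
  exact ⟨ℓ, κ, hℓ, hκ⟩

section comparison

variable {α β : Type*} [Fintype α] [Fintype β] {κ : α → K4.E} {κ₀ : β → K4.E}

theorem indepCount_le_of_card_fiber
    (hκ₀ : ∀ c, #(Multigraph.fiber κ₀ c) = optimalLengths (Fintype.card α) c) (i : ℕ) :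
    Multigraph.indepCount (label ∘ κ) i ≤ Multigraph.indepCount (label ∘ κ₀) i := by
  have hsum := Multigraph.sum_card_fiber κ
  have hsum₀ : ∑ c, #(Multigraph.fiber κ₀ c) = Fintype.card α := by
    rw [funext hκ₀, sum_optimalLengths]
  obtain rfl | rfl | rfl | rfl | hi : i = 0 ∨ i = 1 ∨ i = 2 ∨ i = 3 ∨ 3 < i := by omega
  · rw [Multigraph.indepCount_zero, Multigraph.indepCount_zero]
  · rw [indepCount_one, indepCount_one, ← hsum₀, Multigraph.sum_card_fiber]
  · have h := indepCount_two κ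
    have h₀ := indepCount_two κ₀
    have hsq := sum_sq_optimalLengths_le hsum
    rw [hsum] at h
    simp only [hκ₀, sum_optimalLengths] at h₀
    omega
  · rw [indepCount_three, indepCount_three, funext hκ₀, ← hsum]
    exact cotreeCount_le _
  · rw [Multigraph.indepCount_eq_zero_of_finrank_lt (by rwa [Multigraph.finrank_labelSpace])]
    exact Nat.zero_le _

theorem balanced_of_indepCount_two_le
    (hκ₀ : ∀ c, #(Multigraph.fiber κ₀ c) = optimalLengths (Fintype.card α) c)
    (hle : Multigraph.indepCount (label ∘ κ₀) 2 ≤ Multigraph.indepCount (label ∘ κ) 2) (c : K4.E) :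
    #(Multigraph.fiber κ c) = Fintype.card α / 6 ∨
      #(Multigraph.fiber κ c) = Fintype.card α / 6 + 1 := by
  have hsum := Multigraph.sum_card_fiber κ
  refine eq_or_eq_of_sum_sq_le hsum ?_ c
  have h := indepCount_two κ
  have h₀ := indepCount_two κ₀
  rw [hsum] at h
  simp only [hκ₀, sum_optimalLengths] at h₀
  omega

end comparison

namespace IsOptimalColouring

variable {κ₀ : G.E → K4.E}

theorem connCount_le (hG : IsOptimalColouring G m κ₀) (hH : H.Connected) [Nonempty H.V]
    (hE : H.nE = m) (hV : H.nV + 2 = m) (i : ℕ) : H.connCount i ≤ G.connCount i := by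
  obtain ⟨ℓ, κ, hℓ, hκ⟩ := exists_colouring hH (hE.trans hV.symm)
  rw [hℓ.connCount_eq hH, hG.isCographicRep.connCount_eq hG.connected]
  subst hE
  exact (Multigraph.indepCount_le_of_eq_of_ne_zero hκ i).trans
    (indepCount_le_of_card_fiber hG.card_fiber i)

theorem exists_of_connCount_le (hG : IsOptimalColouring G m κ₀) (hH : H.Connected) [Nonempty H.V]
    (hE : H.nE = m) (hV : H.nV + 2 = m) (hm : 4 ≤ m)
    (hle : ∀ i ≤ 3, G.connCount i ≤ H.connCount i) : ∃ κ, IsOptimalColouring H m κ := by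
  obtain ⟨ℓ, κ, hℓ, hκ⟩ := exists_colouring hH (hE.trans hV.symm)
  simp only [hℓ.connCount_eq hH, hG.isCographicRep.connCount_eq hG.connected] at hle
  have hne : ∀ e, ℓ e ≠ 0 := by
    refine Multigraph.ne_zero_of_card_le_indepCount_one (le_of_eq_of_le ?_ (hle 1 (by norm_num)))
    rw [indepCount_one, ← Multigraph.nE, ← Multigraph.nE, hE, hG.nE_eq]
  obtain rfl : label ∘ κ = ℓ := funext fun e => hκ e (hne e)
  subst hE
  have hbal := balanced_of_indepCount_two_le hG.card_fiber (hle 2 (by norm_num))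
  refine exists_isOptimalColouring hH hℓ rfl hbal ?_
  refine imbalance_eq_of_le_cotreeCount hm (Multigraph.sum_card_fiber κ) hbal ?_
  rw [← funext hG.card_fiber, ← indepCount_three, ← indepCount_three]
  exact hle 3 le_rfl

end IsOptimalColouring

theorem memG_subdivide (hn : 1 ≤ n) :
    memG (subdivide K4 (optimalLengths (n + 2))) n (n + 2) :=
  have h := isOptimalColouring_subdivide (n + 2)
  ⟨Nat.add_right_cancel (h.nV_add_two (by omega)), h.nE_eq, h.connected⟩

theorem zeroAcyclic_optimalLengths (hm : 3 ≤ m) : ZeroAcyclic K4 (optimalLengths m) := by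
  have hV := (isOptimalColouring_subdivide m).nV_add_two hm
  have hE := (isOptimalColouring_subdivide m).nE_eq
  have hK : K4.nE = 6 ∧ K4.nV = 4 := ⟨rfl, rfl⟩
  rw [Multigraph.zeroAcyclic_iff]
  omega

theorem isIso_of_nV_eq_one (hG : memG G 1 m) (hH : memG H 1 m) : IsIso G H := by
  have hV {G : Multigraph} (h : G.nV = 1) (e : G.E) (v : G.V) : G.src e = v ∨ G.tgt e = v :=
    Or.inl (Fintype.card_le_one_iff.1 h.le _ _)
  exact Multigraph.isIso_of_forall_src_or_tgt (hG.1.trans hH.1.symm) (hG.2.1.trans hH.2.1.symm)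
    (hV hG.1) (hV hH.1)

theorem uniquelyOptimal_subdivide (hn : 1 ≤ n) :
    UniquelyOptimal (subdivide K4 (optimalLengths (n + 2))) n (n + 2) := by
  have hG := isOptimalColouring_subdivide (n + 2)
  refine ⟨memG_subdivide hn, fun H hH hiso p hp₀ hp₁ => ?_⟩
  obtain ⟨hV, hE, hconn⟩ := hH
  have : Nonempty H.V := Fintype.card_pos_iff.1 (hn.trans hV.ge)
  have hle := hG.connCount_le hconn hE (by omega)
  refine Multigraph.rel_lt_rel hp₀ hp₁ (hE.trans hG.nE_eq.symm) hle ?_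
  contrapose! hiso
  obtain rfl | hn' := hn.eq_or_lt
  · exact isIso_of_nV_eq_one (memG_subdivide hn) ⟨hV, hE, hconn⟩
  · obtain ⟨κ, hκ⟩ := hG.exists_of_connCount_le hconn hE (by omega) (by omega)
      fun i hi => hiso i (by rw [hG.nE_eq]; omega)
    exact hκ.isIso (by omega)

theorem exists_isOptimalColouring_of_k4Cond {w : K4.E → ℕ} (hH : H.Connected)
    (hiso : IsIso H (subdivide K4 w)) (hw : ∑ e, w e = m) (hbal : BalancedWeights w)
    (hcond : k4Cond m w) : ∃ κ, IsOptimalColouring H m κ := by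
  obtain ⟨φ⟩ := hiso
  have hw' := eq_or_eq_of_balancedWeights hbal hw
  have hfiber (c : K4.E) : #(Multigraph.fiber (Sigma.fst ∘ φ.eMap) c) = w c :=
    (Multigraph.card_fiber_comp_equiv _ _ c).trans (Multigraph.card_fiber_fst w c)
  have hE : H.nE = m := by
    rw [← hw, ← funext hfiber, Multigraph.sum_card_fiber, Multigraph.nE]
  exact exists_isOptimalColouring hH
    ((Multigraph.isCographicRep_subdivide isCographicRep_label w).comp_iso φ) hE
    (fun c => (hfiber c).symm ▸ hw' c)
    ((congrArg imbalance (funext hfiber)).trans ((k4Cond_iff hw hw').1 hcond))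

end K4

/-- for each n ≥ 1 and m = n + 2 there is a uniquely optimal graph in
𝒢_{n,m}; it is a balanced weak subdivision of K₄ satisfying the conditions of
`k4Cond`, and these conditions specify it up to isomorphism. -/
theorem uniquely_optimal_k2 (n m : ℕ) (hn : 1 ≤ n) (hm : m = n + 2) :
    ∃ (G : Multigraph) (w : K4.E → ℕ),
      UniquelyOptimal G n m ∧
      IsWeakSubdivision G K4 w ∧ BalancedWeights w ∧ (∑ e : K4.E, w e) = m ∧
      k4Cond m w ∧
      (∀ (H : Multigraph) (w' : K4.E → ℕ), memG H n m →
        IsWeakSubdivision H K4 w' → BalancedWeights w' → (∑ e : K4.E, w' e) = m →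
        k4Cond m w' → IsIso G H) := by
  subst hm
  refine ⟨_, K4.optimalLengths (n + 2), K4.uniquelyOptimal_subdivide hn,
    ⟨K4.zeroAcyclic_optimalLengths (by omega), IsIso.refl _⟩, K4.balancedWeights_optimalLengths _,
    K4.sum_optimalLengths _, ?_, ?_⟩
  · exact (K4.k4Cond_iff (K4.sum_optimalLengths _) (K4.optimalLengths_eq_or_eq _)).2
      (K4.imbalance_optimalLengths _)
  · rintro H w' ⟨-, -, hH⟩ ⟨-, hiso⟩ hbal hsum hcond
    obtain ⟨κ, hκ⟩ := K4.exists_isOptimalColouring_of_k4Cond hH hiso hsum hbal hcond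
    exact hκ.isIso (by omega)
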